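/- Let n ≥ 1 be an integer, 0 < s < 1, p = 1, and let u : ℝⁿ → ℝ be a continuous function that is 2π-periodic in the variable x₁ and has finite periodic Gagliardo seminorm [u]^{per}_{W^{s,1}}. Then [u^{*per}]^{per}_{W^{s,1}} = [u]^{per}_{W^{s,1}} holds if and only if u = |u| or u = −|u|, and for almost every τ ∈ ℝ there exists a_τ ∈ ℝ such that {|u| > τ} = {|u| > τ}^{*per} + a_τ e₁ up to a set of n-dimensional Lebesgue measure zero, where e₁ = (1,0,…,0) ∈ ℝⁿ. -/

import Mathlib

open MeasureTheory Real
open scoped ENNReal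

/-- For a measurable set `A ⊂ ℝ` of finite measure, `A^* := (−|A|/2, |A|/2)`. -/
noncomputable def symmSet (A : Set ℝ) : Set ℝ :=
  Set.Ioo (-((volume A).toReal / 2)) ((volume A).toReal / 2)

/-- Symmetric decreasing rearrangement of a (nonnegative) function on `(−π,π)`:
`u^*(x) := ∫₀^∞ χ_{{u>t}^*}(x) dt`. -/
noncomputable def symmRearr (u : ℝ → ℝ) : ℝ → ℝ := fun x =>
  ∫ t in Set.Ioi (0 : ℝ),
    (symmSet {y | y ∈ Set.Ioo (-π) π ∧ t < u y}).indicator (fun _ => (1 : ℝ)) x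

/-- The `2π`-periodic extension of (the restriction to `[−π,π)` of) a function. -/
noncomputable def periodize (f : ℝ → ℝ) : ℝ → ℝ := fun x =>
  f (x - 2 * π * (⌊(x + π) / (2 * π)⌋ : ℝ))

/-- The periodic rearrangement `f^{*per}`: the `2π`-periodic extension of `(f·χ_{(−π,π)})^*`. -/
noncomputable def perRearr (f : ℝ → ℝ) : ℝ → ℝ := periodize (symmRearr f)
/-- `([u]^{per}_{W^{s,p}})^p`, the `p`-th power of the periodic Gagliardo seminorm on
`ℝⁿ = ℝ × ℝ^{n−1}` (so `n = m + 1`), for a function which is `2π`-periodic in the first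
variable. -/
noncomputable def gagP (m : ℕ) (s p : ℝ) (u : ℝ × EuclideanSpace ℝ (Fin m) → ℝ) : ℝ≥0∞ :=
  ∫⁻ x in {x : ℝ × EuclideanSpace ℝ (Fin m) | x.1 ∈ Set.Ioo (-π) π},
    ∫⁻ y : ℝ × EuclideanSpace ℝ (Fin m),
      ENNReal.ofReal (|u x - u y| ^ p /
        Real.sqrt ((x.1 - y.1) ^ 2 + ‖x.2 - y.2‖ ^ 2) ^ ((m : ℝ) + 1 + s * p))

/-- The periodic Gagliardo seminorm `[u]^{per}_{W^{s,p}}`. -/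
noncomputable def gagSeminorm (m : ℕ) (s p : ℝ) (u : ℝ × EuclideanSpace ℝ (Fin m) → ℝ) :
    ℝ≥0∞ :=
  gagP m s p u ^ (1 / p)
/-- The periodic rearrangement in the first variable:
`u^{*per}(x₁,x') := (|u(·,x')|)^{*per}(x₁)`. -/
noncomputable def perRearr1 (m : ℕ) (u : ℝ × EuclideanSpace ℝ (Fin m) → ℝ) :
    ℝ × EuclideanSpace ℝ (Fin m) → ℝ := fun x =>
  perRearr (fun t => |u (t, x.2)|) x.1
/-- The periodic rearrangement `A^{*per} := {χ_A^{*per} > 0}` of a set which is `2π`-periodic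
in the first variable. -/
noncomputable def perRearrSet (m : ℕ) (A : Set (ℝ × EuclideanSpace ℝ (Fin m))) :
    Set (ℝ × EuclideanSpace ℝ (Fin m)) :=
  {x | 0 < perRearr1 m (A.indicator fun _ => (1 : ℝ)) x}

/-!
For `p = 1` the energy is the integral over `τ` of the energies of the superlevel sets `{u > τ}`.
Functions that are `2π`-periodic in `x₁` live on the cylinder `Angle × ℝⁿ⁻¹`, where the kernel
becomes the periodisation `∑ₙ ((t + 2πn)² + r²) ^ (-γ)` with `γ = (n + s) / 2`. Writing the power as
a Gamma integral of Gaussians and factoring the periodised Gaussian by the Jacobi triple product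
shows that the kernel is a strictly increasing function of `cos t`. Hence polarization with respect
to a reflection of the circle does not increase the energy, and the energy drops strictly as soon as
the reflection orders two sets of positive measure in opposite ways.

Among the functions that arise from `v = |u|` by rearrangement on circles with no more energy and no
worse moduli of continuity, which form a compact class closed under polarization, one maximises a
moment against the cosine; no polarization improves it, so it is `v*`. As `v*` is also the
rearrangement of each polarization of `v`, the equality `[v*] = [v]` makes every polarization of `v`
an equality case, and the equality `[v] = [u]` means that `u` does not change sign. Since `v` is
continuous, each reflection then orders each superlevel set in one of the two possible ways
everywhere, and translating the set by an angle which maximises the component of its first moment in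
that direction makes all of these orderings agree with those of the rearranged set.
-/

namespace PeriodicRearrangement

open Filter Topology Set

section TripleProduct

variable {K : Type*} [NormedField K] {q z : K}

/-- The `q`-Pochhammer symbol `(q; q)_n = ∏_{i=1}^n (1 - q ^ i)`. -/
def qPochhammer (q : K) (n : ℕ) : K := ∏ i ∈ Finset.range n, (1 - q ^ (i + 1))

/-- The reciprocal `1 / (q; q)_n` of the `q`-Pochhammer symbol, extended by zero to negative `n`
(as for the reciprocal of the Gamma function). -/
def invQPochhammer (q : K) (n : ℤ) : K := if n < 0 then 0 else (qPochhammer q n.toNat)⁻¹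

/-- The coefficient of `z ^ k` in the finite Jacobi triple product
`∏_{j < N} (1 + q ^ (2 * j + 1) * z) * (1 + q ^ (2 * j + 1) * z⁻¹)`, which is
`q ^ k ^ 2` times a Gaussian binomial coefficient in base `q ^ 2`. -/
def tripleProductCoeff (q : K) (N : ℕ) (k : ℤ) : K :=
  qPochhammer (q ^ 2) (2 * N) * invQPochhammer (q ^ 2) (N + k) * invQPochhammer (q ^ 2) (N - k) *
    q ^ (k ^ 2)

lemma qPochhammer_succ (q : K) (n : ℕ) :
    qPochhammer q (n + 1) = qPochhammer q n * (1 - q ^ (n + 1)) :=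
  Finset.prod_range_succ _ _

lemma one_sub_pow_ne_zero (hq : ‖q‖ < 1) {n : ℕ} (hn : n ≠ 0) : 1 - q ^ n ≠ 0 := by
  refine sub_ne_zero.mpr fun h => (pow_lt_one₀ (norm_nonneg q) hq hn).ne ?_
  rw [← norm_pow, ← h, norm_one]

lemma invQPochhammer_sub_one (hq : ‖q‖ < 1) (n : ℤ) :
    invQPochhammer q (n - 1) = (1 - q ^ n) * invQPochhammer q n := by
  rcases lt_trichotomy n 0 with h | rfl | h
  · simp [invQPochhammer, h, show n - 1 < 0 by omega]
  · simp [invQPochhammer]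
  · obtain ⟨k, rfl⟩ : ∃ k : ℕ, n = (k + 1 : ℕ) := ⟨(n - 1).toNat, by omega⟩
    rw [invQPochhammer, invQPochhammer, if_neg (by omega), if_neg (by omega),
      show ((k + 1 : ℕ) - 1 : ℤ).toNat = k by omega, Int.toNat_natCast, qPochhammer_succ,
      zpow_natCast, mul_inv_rev, mul_inv_cancel_left₀ (one_sub_pow_ne_zero hq k.succ_ne_zero)]

lemma tripleProductCoeff_succ (hq0 : q ≠ 0) (hq : ‖q‖ < 1) (N : ℕ) (k : ℤ) :
    tripleProductCoeff q (N + 1) k = (1 + q ^ (4 * N + 2)) * tripleProductCoeff q N k +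
      q ^ (2 * N + 1) * (tripleProductCoeff q N (k - 1) + tripleProductCoeff q N (k + 1)) := by
  have hQ : ‖q ^ 2‖ < 1 := norm_pow q 2 ▸ pow_lt_one₀ (norm_nonneg q) hq two_ne_zero
  have sq_zpow (m : ℤ) : (q ^ 2) ^ m = (q ^ m) ^ 2 := by
    rw [← zpow_natCast, ← zpow_natCast, ← zpow_mul, ← zpow_mul, mul_comm]
  simp only [tripleProductCoeff, Nat.cast_add, Nat.cast_one]
  rw [show (N : ℤ) + (k - 1) = N + 1 + k - 1 - 1 by ring,
    show (N : ℤ) - (k - 1) = N + 1 - k by ring, show (N : ℤ) + (k + 1) = N + 1 + k by ring,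
    show (N : ℤ) - (k + 1) = N + 1 - k - 1 - 1 by ring, show (N : ℤ) + k = N + 1 + k - 1 by ring,
    show (N : ℤ) - k = N + 1 - k - 1 by ring, show 2 * (N + 1) = 2 * N + 1 + 1 by ring,
    show (k - 1) ^ 2 = k ^ 2 + 1 - k - k by ring, show (k + 1) ^ 2 = k ^ 2 + 1 + k + k by ring]
  simp only [invQPochhammer_sub_one hQ, qPochhammer_succ, sq_zpow, zpow_add₀ hq0, zpow_sub₀ hq0,
    zpow_one, zpow_natCast]
  rw [show (q ^ 2) ^ (2 * N + 1) = (q ^ N) ^ 4 * q ^ 2 by ring,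
    show (q ^ 2) ^ (2 * N + 1 + 1) = (q ^ N) ^ 4 * q ^ 4 by ring,
    show q ^ (4 * N + 2) = (q ^ N) ^ 4 * q ^ 2 by ring,
    show q ^ (2 * N + 1) = (q ^ N) ^ 2 * q by ring]
  have hqk : q ^ k ≠ 0 := zpow_ne_zero k hq0
  field_simp
  ring

lemma hasSum_tripleProductCoeff (hq0 : q ≠ 0) (hq : ‖q‖ < 1) (hz : z ≠ 0) (N : ℕ) :
    HasSum (fun k : ℤ => tripleProductCoeff q N k * z ^ k)
      (∏ j ∈ Finset.range N, (1 + q ^ (2 * j + 1) * z) * (1 + q ^ (2 * j + 1) * z⁻¹)) := by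
  induction N with
  | zero =>
    have eq_zero_of_ne (k : ℤ) (hk : k ≠ 0) : tripleProductCoeff q 0 k * z ^ k = 0 := by
      rcases lt_or_gt_of_ne hk with h | h <;> simp [tripleProductCoeff, invQPochhammer, h]
    simpa [tripleProductCoeff, invQPochhammer, qPochhammer] using hasSum_single 0 eq_zero_of_ne
  | succ N ih =>
    rw [Finset.prod_range_succ]
    set P := ∏ j ∈ Finset.range N, (1 + q ^ (2 * j + 1) * z) * (1 + q ^ (2 * j + 1) * z⁻¹)
    have sum_pred : HasSum (fun k : ℤ => tripleProductCoeff q N (k - 1) * z ^ k) (P * z) := by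
      refine ((Equiv.subRight (1 : ℤ)).hasSum_iff.mpr (ih.mul_right z)).congr_fun fun k => ?_
      simp [mul_assoc, ← zpow_add_one₀ hz]
    have sum_succ : HasSum (fun k : ℤ => tripleProductCoeff q N (k + 1) * z ^ k) (P * z⁻¹) := by
      refine ((Equiv.addRight (1 : ℤ)).hasSum_iff.mpr (ih.mul_right z⁻¹)).congr_fun fun k => ?_
      simp [mul_assoc, ← zpow_sub_one₀ hz]
    have recursion : P * ((1 + q ^ (2 * N + 1) * z) * (1 + q ^ (2 * N + 1) * z⁻¹)) =
        (1 + q ^ (4 * N + 2)) * P + q ^ (2 * N + 1) * (P * z + P * z⁻¹) := by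
      field_simp
      ring
    rw [recursion]
    refine ((ih.mul_left (1 + q ^ (4 * N + 2))).add
      ((sum_pred.add sum_succ).mul_left (q ^ (2 * N + 1)))).congr_fun fun k => ?_
    rw [tripleProductCoeff_succ hq0 hq]
    ring

lemma summable_neg_pow_succ (hq : ‖q‖ < 1) : Summable fun i : ℕ => ‖-q ^ (i + 1)‖ := by
  simpa only [norm_neg, norm_pow] using
    (summable_nat_add_iff 1).mpr (summable_geometric_of_lt_one (norm_nonneg q) hq)

lemma summable_norm_zpow_sq_mul_zpow (hq0 : q ≠ 0) (hq : ‖q‖ < 1) (hz : z ≠ 0) :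
    Summable fun k : ℤ => ‖q‖ ^ (k ^ 2) * ‖z‖ ^ k := by
  have hT : 0 < -log ‖q‖ / π := div_pos (neg_pos.mpr (log_neg (norm_pos_iff.mpr hq0) hq)) pi_pos
  refine (summable_pow_mul_jacobiTheta₂_term_bound (|log ‖z‖| / (2 * π)) hT 0).of_nonneg_of_le
    (fun k => by positivity) fun k => ?_
  rw [← rpow_intCast, ← rpow_intCast, rpow_def_of_pos (norm_pos_iff.mpr hq0),
    rpow_def_of_pos (norm_pos_iff.mpr hz), ← exp_add, pow_zero, one_mul, exp_le_exp]
  have h : log ‖z‖ * k ≤ |log ‖z‖| * |(k : ℝ)| := (le_abs_self _).trans (abs_mul _ _).le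
  field_simp
  push_cast
  linarith

variable [CompleteSpace K]

lemma tprod_one_sub_pow_ne_zero (hq : ‖q‖ < 1) : ∏' i : ℕ, (1 - q ^ (i + 1)) ≠ 0 := by
  have factor_ne_zero (i : ℕ) : 1 + -q ^ (i + 1) ≠ 0 := by
    simpa only [sub_eq_add_neg] using one_sub_pow_ne_zero hq i.succ_ne_zero
  simpa only [sub_eq_add_neg] using
    tprod_one_add_ne_zero_of_summable factor_ne_zero (summable_neg_pow_succ hq)

lemma tendsto_qPochhammer (hq : ‖q‖ < 1) :
    Tendsto (qPochhammer q) atTop (𝓝 (∏' i : ℕ, (1 - q ^ (i + 1)))) := by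
  simpa only [funext fun n => qPochhammer.eq_1 q n, sub_eq_add_neg] using
    (multipliable_one_add_of_summable (f := fun i => -q ^ (i + 1))
      (summable_neg_pow_succ hq)).hasProd.tendsto_prod_nat

lemma tendsto_invQPochhammer_add (hq : ‖q‖ < 1) (k : ℤ) :
    Tendsto (fun N : ℕ => invQPochhammer q (N + k)) atTop
      (𝓝 (∏' i : ℕ, (1 - q ^ (i + 1)))⁻¹) := by
  have toNat_tendsto : Tendsto (fun N : ℕ => ((N : ℤ) + k).toNat) atTop atTop := by
    refine tendsto_atTop.mpr fun b => ?_
    filter_upwards [eventually_ge_atTop (b + k.natAbs)] with N hN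
    omega
  refine (((tendsto_qPochhammer hq).comp toNat_tendsto).inv₀
    (tprod_one_sub_pow_ne_zero hq)).congr' ?_
  filter_upwards [eventually_ge_atTop k.natAbs] with N hN
  rw [invQPochhammer, if_neg (by omega), Function.comp_apply]

lemma tendsto_tripleProductCoeff (hq : ‖q‖ < 1) (k : ℤ) :
    Tendsto (fun N => tripleProductCoeff q N k) atTop
      (𝓝 ((∏' i : ℕ, (1 - (q ^ 2) ^ (i + 1)))⁻¹ * q ^ (k ^ 2))) := by
  have hQ : ‖q ^ 2‖ < 1 := norm_pow q 2 ▸ pow_lt_one₀ (norm_nonneg q) hq two_ne_zero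
  have tendsto_num : Tendsto (fun N : ℕ => qPochhammer (q ^ 2) (2 * N)) atTop
      (𝓝 (∏' i : ℕ, (1 - (q ^ 2) ^ (i + 1)))) :=
    (tendsto_qPochhammer hQ).comp (tendsto_id.const_mul_atTop' two_pos)
  have h := ((tendsto_num.mul (tendsto_invQPochhammer_add hQ k)).mul
    (tendsto_invQPochhammer_add hQ (-k))).mul_const (q ^ (k ^ 2))
  simpa only [tripleProductCoeff, mul_inv_cancel₀ (tprod_one_sub_pow_ne_zero hQ), one_mul,
    ← sub_eq_add_neg] using h

lemma exists_norm_tripleProductCoeff_le (hq : ‖q‖ < 1) :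
    ∃ C, ∀ N k, ‖tripleProductCoeff q N k‖ ≤ C * ‖q‖ ^ (k ^ 2) := by
  have hQ : ‖q ^ 2‖ < 1 := norm_pow q 2 ▸ pow_lt_one₀ (norm_nonneg q) hq two_ne_zero
  obtain ⟨A, hA⟩ := (Metric.isBounded_range_of_tendsto _ (tendsto_qPochhammer hQ)).exists_norm_le
  obtain ⟨B, hB⟩ := (Metric.isBounded_range_of_tendsto _
    ((tendsto_qPochhammer hQ).inv₀ (tprod_one_sub_pow_ne_zero hQ))).exists_norm_le
  rw [forall_mem_range] at hA hB
  have hA0 : 0 ≤ A := (norm_nonneg _).trans (hA 0)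
  have hB0 : 0 ≤ B := (norm_nonneg _).trans (hB 0)
  have norm_inv_le (n : ℤ) : ‖invQPochhammer (q ^ 2) n‖ ≤ B := by
    rw [invQPochhammer]
    split_ifs
    · simpa using hB0
    · exact hB _
  refine ⟨A * B * B, fun N k => ?_⟩
  rw [tripleProductCoeff, norm_mul, norm_mul, norm_mul, norm_zpow]
  gcongr
  exacts [hA _, norm_inv_le _, norm_inv_le _]

theorem tendsto_prod_jacobi_triple (hq0 : q ≠ 0) (hq : ‖q‖ < 1) (hz : z ≠ 0) :
    Tendsto (fun N : ℕ =>
        ∏ j ∈ Finset.range N, (1 + q ^ (2 * j + 1) * z) * (1 + q ^ (2 * j + 1) * z⁻¹)) atTop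
      (𝓝 ((∏' i : ℕ, (1 - (q ^ 2) ^ (i + 1)))⁻¹ * ∑' k : ℤ, q ^ (k ^ 2) * z ^ k)) := by
  obtain ⟨C, hC⟩ := exists_norm_tripleProductCoeff_le hq
  simp_rw [← (hasSum_tripleProductCoeff hq0 hq hz _).tsum_eq, ← tsum_mul_left]
  refine tendsto_tsum_of_dominated_convergence
    ((summable_norm_zpow_sq_mul_zpow hq0 hq hz).mul_left C) (fun k => ?_)
    (Eventually.of_forall fun N k => ?_)
  · simpa only [mul_assoc] using (tendsto_tripleProductCoeff hq k).mul_const (z ^ k)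
  · rw [norm_mul, norm_zpow, ← mul_assoc]
    gcongr
    exact hC N k

end TripleProduct

section PeriodizedGaussian

variable {a : ℝ}

/-- The `2π`-periodisation of the Gaussian `t ↦ exp (-a * t ^ 2)`, i.e. up to normalisation the
heat kernel of the circle at time `1 / (4 * a)`. -/
noncomputable def periodizedGaussian (a t : ℝ) : ℝ :=
  ∑' n : ℤ, exp (-a * (t + 2 * π * n) ^ 2)

lemma summable_periodizedGaussian (ha : 0 < a) (t : ℝ) :
    Summable fun n : ℤ => exp (-a * (t + 2 * π * n) ^ 2) := by
  refine (summable_pow_mul_jacobiTheta₂_term_bound (2 * a * |t|) (T := 4 * π * a)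
    (by positivity) 0).of_nonneg_of_le (fun n => (exp_pos _).le) fun n => ?_
  rw [pow_zero, one_mul, exp_le_exp]
  have h1 : -(t * n) ≤ |t| * |(n : ℝ)| := by rw [← abs_mul]; exact neg_le_abs _
  have h2 : 0 ≤ a * t ^ 2 := by positivity
  have h3 : 0 < π * a := by positivity
  push_cast
  nlinarith [mul_le_mul_of_nonneg_left h1 h3.le]

lemma periodizedGaussian_pos (ha : 0 < a) (t : ℝ) : 0 < periodizedGaussian a t :=
  (summable_periodizedGaussian ha t).tsum_pos (fun _ => (exp_pos _).le) 0 (exp_pos _)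

lemma periodizedGaussian_eq_tsum_zpow (ha : 0 < a) (t : ℝ) :
    (periodizedGaussian a t : ℂ) = ((1 / (4 * π * a)) ^ (1 / 2 : ℝ) : ℝ) *
      ∑' k : ℤ, (exp (-(1 / (4 * a))) : ℂ) ^ (k ^ 2) * Complex.exp (-(t * Complex.I)) ^ k := by
  set A : ℝ := 1 / (4 * π * a) with hA
  have hA0 : 0 < A := by positivity
  have haC : (a : ℂ) ≠ 0 := by exact_mod_cast ha.ne'
  have hAC : (A : ℂ) = 1 / (4 * π * a) := by rw [hA]; push_cast; rfl
  have fourier_term (n : ℤ) :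
      Complex.exp (-π * A * n ^ 2 + 2 * π * (-(Complex.I * t / (2 * π))) * n) =
        (exp (-(1 / (4 * a))) : ℂ) ^ (n ^ 2) * Complex.exp (-(t * Complex.I)) ^ n := by
    rw [Complex.ofReal_exp, ← Complex.exp_int_mul, ← Complex.exp_int_mul, ← Complex.exp_add, hAC]
    congr 1
    push_cast
    field_simp
  have gaussian_term (n : ℤ) :
      Complex.exp (-π / A * (n + Complex.I * (-(Complex.I * t / (2 * π)))) ^ 2) =
        (exp (-a * (t + 2 * π * n) ^ 2) : ℝ) := by
    rw [Complex.ofReal_exp, hAC,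
      show Complex.I * (-(Complex.I * t / (2 * π))) = t / (2 * π) by
        rw [mul_neg, ← mul_div_assoc, ← mul_assoc, Complex.I_mul_I]; ring]
    congr 1
    push_cast
    field_simp
    ring
  have poisson := Complex.tsum_exp_neg_quadratic (a := (A : ℂ)) (by simpa using hA0)
    (-(Complex.I * t / (2 * π)))
  simp_rw [fourier_term, gaussian_term] at poisson
  rw [poisson, ← Complex.ofReal_tsum, ← mul_assoc,
    show (1 / 2 : ℂ) = ((1 / 2 : ℝ) : ℂ) by push_cast; rfl, ← Complex.ofReal_cpow hA0.le,
    mul_one_div_cancel (by exact_mod_cast (rpow_pos_of_pos hA0 _).ne'), one_mul,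
    periodizedGaussian]

lemma tprod_one_sub_pow_pos {q : ℝ} (hq0 : 0 ≤ q) (hq : q < 1) :
    0 < ∏' i : ℕ, (1 - q ^ (i + 1)) := by
  have hq' : ‖q‖ < 1 := by rwa [norm_of_nonneg hq0]
  refine (ge_of_tendsto' (tendsto_qPochhammer hq') fun n => ?_).lt_of_ne'
    (tprod_one_sub_pow_ne_zero hq')
  exact Finset.prod_nonneg fun i _ => sub_nonneg.mpr (pow_le_one₀ hq0 hq.le)

lemma ofReal_tprod_one_sub_pow {q : ℝ} (hq : ‖q‖ < 1) :
    ((∏' i : ℕ, (1 - q ^ (i + 1)) : ℝ) : ℂ) = ∏' i : ℕ, (1 - (q : ℂ) ^ (i + 1)) := by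
  have multipliable : Multipliable fun i : ℕ => 1 - q ^ (i + 1) := by
    simpa only [sub_eq_add_neg] using
      multipliable_one_add_of_summable (f := fun i => -q ^ (i + 1)) (summable_neg_pow_succ hq)
  simpa using multipliable.map_tprod Complex.ofRealHom Complex.continuous_ofReal

lemma tendsto_prod_periodizedGaussian (ha : 0 < a) :
    ∃ C > 0, ∀ t, Tendsto (fun N : ℕ => ∏ j ∈ Finset.range N,
        (1 + 2 * exp (-(1 / (4 * a))) ^ (2 * j + 1) * cos t +
          (exp (-(1 / (4 * a))) ^ (2 * j + 1)) ^ 2))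
      atTop (𝓝 (C * periodizedGaussian a t)) := by
  set q := exp (-(1 / (4 * a)))
  have hq0 : 0 < q := exp_pos _
  have hq1 : q < 1 := Real.exp_lt_one_iff.mpr (neg_neg_of_pos (by positivity))
  have hQ1 : q ^ 2 < 1 := pow_lt_one₀ hq0.le hq1 two_ne_zero
  set A : ℝ := (1 / (4 * π * a)) ^ (1 / 2 : ℝ)
  have hA : 0 < A := rpow_pos_of_pos (by positivity) _
  refine ⟨(∏' i : ℕ, (1 - (q ^ 2) ^ (i + 1)))⁻¹ * A⁻¹,
    mul_pos (inv_pos.mpr (tprod_one_sub_pow_pos (by positivity) hQ1)) (inv_pos.mpr hA), fun t => ?_⟩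
  have triple := tendsto_prod_jacobi_triple (q := (q : ℂ)) (z := Complex.exp (-(t * Complex.I)))
    (by exact_mod_cast hq0.ne') (by simpa [abs_of_pos hq0] using hq1) (Complex.exp_ne_zero _)
  have limit_eq : (((∏' i : ℕ, (1 - (q ^ 2) ^ (i + 1)))⁻¹ * A⁻¹ * periodizedGaussian a t : ℝ) : ℂ) =
      (∏' i : ℕ, (1 - ((q : ℂ) ^ 2) ^ (i + 1)))⁻¹ *
        ∑' k : ℤ, (q : ℂ) ^ (k ^ 2) * Complex.exp (-(t * Complex.I)) ^ k := by
    have hAC : (A : ℂ) ≠ 0 := by exact_mod_cast hA.ne'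
    rw [Complex.ofReal_mul, periodizedGaussian_eq_tsum_zpow ha, Complex.ofReal_mul,
      Complex.ofReal_inv, Complex.ofReal_inv,
      ofReal_tprod_one_sub_pow (by simpa [abs_of_pos hq0] using hQ1), mul_assoc,
      inv_mul_cancel_left₀ hAC, Complex.ofReal_pow]
  rw [← limit_eq] at triple
  refine (Complex.continuous_re.tendsto _ |>.comp triple).congr fun N => ?_
  rw [Function.comp_apply, ← Complex.ofReal_re (∏ j ∈ Finset.range N, _), Complex.ofReal_prod]
  congr 1
  refine Finset.prod_congr rfl fun j _ => ?_
  have exp_mul_exp : Complex.exp (-(t * Complex.I)) * Complex.exp (t * Complex.I) = 1 := by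
    rw [← Complex.exp_add, neg_add_cancel, Complex.exp_zero]
  push_cast
  rw [Complex.cos, ← Complex.exp_neg, neg_neg, neg_mul]
  linear_combination ((q : ℂ) ^ (2 * j + 1)) ^ 2 * exp_mul_exp

lemma lt_of_tendsto_prod {f g : ℕ → ℝ} {F G : ℝ} (hf : ∀ j, 0 < f j) (hfg : ∀ j, f j ≤ g j)
    (hlt : f 0 < g 0) (hG : 0 < G) (hF : Tendsto (fun N => ∏ j ∈ Finset.range N, f j) atTop (𝓝 F))
    (hg : Tendsto (fun N => ∏ j ∈ Finset.range N, g j) atTop (𝓝 G)) : F < G := by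
  have hg0 : 0 < g 0 := (hf 0).trans hlt
  have prod_le (N : ℕ) : ∏ j ∈ Finset.range (N + 1), f j ≤
      f 0 / g 0 * ∏ j ∈ Finset.range (N + 1), g j := by
    rw [Finset.prod_range_succ', Finset.prod_range_succ',
      show f 0 / g 0 * ((∏ j ∈ Finset.range N, g (j + 1)) * g 0) =
        (∏ j ∈ Finset.range N, g (j + 1)) * f 0 by field_simp]
    gcongr with j
    exacts [(hf 0).le, fun j _ => (hf _).le, hfg _]
  calc F ≤ f 0 / g 0 * G := le_of_tendsto_of_tendsto' (hF.comp (tendsto_add_atTop_nat 1))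
        ((hg.comp (tendsto_add_atTop_nat 1)).const_mul _) prod_le
    _ < G := mul_lt_of_lt_one_left hG ((div_lt_one hg0).mpr hlt)

lemma periodizedGaussian_lt_of_cos_lt (ha : 0 < a) {t t' : ℝ} (h : cos t' < cos t) :
    periodizedGaussian a t' < periodizedGaussian a t := by
  obtain ⟨C, hC, tendsto_prod⟩ := tendsto_prod_periodizedGaussian ha
  set q := exp (-(1 / (4 * a)))
  have hq0 : 0 < q := exp_pos _
  have hq1 : q < 1 := Real.exp_lt_one_iff.mpr (neg_neg_of_pos (by positivity))
  have factor_pos (j : ℕ) : 0 < 1 + 2 * q ^ (2 * j + 1) * cos t' + (q ^ (2 * j + 1)) ^ 2 := by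
    have : q ^ (2 * j + 1) < 1 := pow_lt_one₀ hq0.le hq1 (by omega)
    nlinarith [neg_one_le_cos t', pow_pos hq0 (2 * j + 1)]
  refine lt_of_mul_lt_mul_left (lt_of_tendsto_prod factor_pos (fun j => by gcongr) ?_
    (mul_pos hC (periodizedGaussian_pos ha t)) (tendsto_prod t') (tendsto_prod t)) hC.le
  gcongr

end PeriodizedGaussian

section PeriodizedKernel

variable {γ t t' r : ℝ}

/-- The `2π`-periodisation in `t` of the Riesz-type kernel `(t ^ 2 + r ^ 2) ^ (-γ)`. It takes
values in `ℝ≥0∞`, and is infinite on the singular set `r = 0`, `t ∈ 2πℤ`. -/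
noncomputable def periodizedRiesz (γ t r : ℝ) : ℝ≥0∞ :=
  ∑' n : ℤ, ENNReal.ofReal ((t + 2 * π * n) ^ 2 + r ^ 2) ^ (-γ)

lemma measurable_periodizedRiesz (γ : ℝ) :
    Measurable fun p : ℝ × ℝ => periodizedRiesz γ p.1 p.2 :=
  Measurable.tsum fun n => by fun_prop

lemma periodizedRiesz_eq_of_cos_eq (γ r : ℝ) (h : cos t = cos t') :
    periodizedRiesz γ t r = periodizedRiesz γ t' r := by
  obtain ⟨k, rfl | rfl⟩ := cos_eq_cos_iff.mp h
  · rw [periodizedRiesz, ← (Equiv.addRight k).tsum_eq, periodizedRiesz]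
    refine tsum_congr fun n => ?_
    rw [Equiv.coe_addRight]
    push_cast
    ring_nf
  · rw [periodizedRiesz, ← (Equiv.subLeft (-k)).tsum_eq, periodizedRiesz]
    refine tsum_congr fun n => ?_
    rw [Equiv.subLeft_apply]
    push_cast
    ring_nf

lemma add_two_pi_mul_ne_zero (h : cos t ≠ 1) (n : ℤ) : t + 2 * π * n ≠ 0 := fun h0 =>
  h ((cos_eq_one_iff t).mpr ⟨-n, by push_cast; linarith⟩)

lemma periodizedRiesz_lt_top (hγ : 1 / 2 < γ) (r : ℝ) (h : cos t ≠ 1) :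
    periodizedRiesz γ t r < ⊤ := by
  have summable : Summable fun n : ℤ => (2 * π) ^ (-(2 * γ)) * (1 / |n + t / (2 * π)| ^ (2 * γ)) :=
    ((summable_one_div_int_add_rpow (t / (2 * π)) (2 * γ)).mpr (by linarith)).mul_left _
  have term_le (n : ℤ) : ENNReal.ofReal ((t + 2 * π * n) ^ 2 + r ^ 2) ^ (-γ) ≤
      ENNReal.ofReal ((2 * π) ^ (-(2 * γ)) * (1 / |n + t / (2 * π)| ^ (2 * γ))) := by
    have ne_zero := add_two_pi_mul_ne_zero h n
    have abs_eq : 2 * π * |n + t / (2 * π)| = |t + 2 * π * n| := by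
      nth_rw 1 [← abs_of_pos two_pi_pos]
      rw [← abs_mul]
      congr 1
      field_simp
      ring
    rw [one_div, ← rpow_neg (abs_nonneg _), ← mul_rpow two_pi_pos.le (abs_nonneg _), abs_eq,
      ENNReal.ofReal_rpow_of_pos (by positivity), ← mul_neg, rpow_mul (abs_nonneg _), rpow_two,
      sq_abs]
    exact ENNReal.ofReal_le_ofReal (rpow_le_rpow_of_nonpos (by positivity)
      (le_add_of_nonneg_right (sq_nonneg r)) (by linarith))
  refine (ENNReal.tsum_le_tsum term_le).trans_lt ?_
  rw [← ENNReal.ofReal_tsum_of_nonneg (fun n => by positivity) summable]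
  exact ENNReal.ofReal_lt_top

lemma Gamma_mul_ofReal_rpow_neg {x : ℝ} (hγ : 0 < γ) (hx : 0 < x) :
    ENNReal.ofReal (Gamma γ) * ENNReal.ofReal x ^ (-γ) =
      ∫⁻ a in Ioi (0 : ℝ), ENNReal.ofReal (a ^ (γ - 1) * exp (-(x * a))) := by
  have integrable : IntegrableOn (fun a : ℝ => a ^ (γ - 1) * exp (-(x * a))) (Ioi 0) := by
    simpa using integrableOn_rpow_mul_exp_neg_mul_rpow (s := γ - 1) (by linarith) one_pos hx
  rw [← ofReal_integral_eq_lintegral_ofReal integrable, integral_rpow_mul_exp_neg_mul_Ioi hγ hx,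
    ENNReal.ofReal_rpow_of_pos hx, ← ENNReal.ofReal_mul (Gamma_pos_of_pos hγ).le, mul_comm,
    one_div, inv_rpow hx.le, rpow_neg hx.le]
  filter_upwards [ae_restrict_mem measurableSet_Ioi] with a (ha : 0 < a)
  positivity

lemma Gamma_mul_periodizedRiesz (hγ : 0 < γ) (h : r ≠ 0 ∨ cos t ≠ 1) :
    ENNReal.ofReal (Gamma γ) * periodizedRiesz γ t r =
      ∫⁻ a in Ioi (0 : ℝ), ENNReal.ofReal (a ^ (γ - 1) * exp (-(r ^ 2 * a))) *
        ENNReal.ofReal (periodizedGaussian a t) := by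
  have term_pos (n : ℤ) : 0 < (t + 2 * π * n) ^ 2 + r ^ 2 := by
    rcases h with h | h
    · positivity
    · have := add_two_pi_mul_ne_zero h n
      positivity
  rw [periodizedRiesz, ← ENNReal.tsum_mul_left]
  simp_rw [fun n => Gamma_mul_ofReal_rpow_neg hγ (term_pos n)]
  rw [← lintegral_tsum fun n => by fun_prop]
  refine setLIntegral_congr_fun measurableSet_Ioi fun a (ha : 0 < a) => ?_
  rw [periodizedGaussian, ENNReal.ofReal_tsum_of_nonneg (fun n => (exp_pos _).le)
    (summable_periodizedGaussian ha t), ← ENNReal.tsum_mul_left]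
  refine tsum_congr fun n => ?_
  rw [← ENNReal.ofReal_mul (by positivity), mul_assoc (a ^ _), ← exp_add]
  ring_nf

lemma measurable_periodizedGaussian (t : ℝ) : Measurable fun a => periodizedGaussian a t :=
  Measurable.tsum fun n => by fun_prop

lemma periodizedRiesz_zero_eq_top (hγ : 0 < γ) (h : cos t = 1) : periodizedRiesz γ t 0 = ⊤ := by
  obtain ⟨k, rfl⟩ := (cos_eq_one_iff t).mp h
  refine ENNReal.tsum_eq_top_of_eq_top ⟨-k, ?_⟩
  rw [show (k * (2 * π) + 2 * π * (-k : ℤ)) ^ 2 + (0 : ℝ) ^ 2 = 0 by push_cast; ring,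
    ENNReal.ofReal_zero, ENNReal.zero_rpow_of_neg (neg_neg_of_pos hγ)]

lemma periodizedRiesz_lt_of_cos_lt (hγ : 1 / 2 < γ) (r : ℝ) (h : cos t' < cos t) :
    periodizedRiesz γ t' r < periodizedRiesz γ t r := by
  have hγ0 : 0 < γ := by linarith
  have hΓ : ENNReal.ofReal (Gamma γ) ≠ 0 := by simpa using Gamma_pos_of_pos hγ0
  have ht' : cos t' ≠ 1 := (h.trans_le (cos_le_one t)).ne
  have lt_top := periodizedRiesz_lt_top hγ r ht'
  by_cases hsing : r ≠ 0 ∨ cos t ≠ 1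
  swap
  · push Not at hsing
    rw [hsing.1, periodizedRiesz_zero_eq_top hγ0 hsing.2]
    exact hsing.1 ▸ lt_top
  rw [← ENNReal.mul_lt_mul_iff_right hΓ ENNReal.ofReal_ne_top,
    Gamma_mul_periodizedRiesz hγ0 (.inr ht'), Gamma_mul_periodizedRiesz hγ0 hsing]
  refine lintegral_strict_mono (by simp [Measure.restrict_eq_zero])
    (Measurable.mul (by fun_prop)
      (measurable_periodizedGaussian t).ennreal_ofReal).aemeasurable ?_ ?_
  · rw [← Gamma_mul_periodizedRiesz hγ0 (.inr ht')]
    exact ENNReal.mul_ne_top ENNReal.ofReal_ne_top lt_top.ne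
  · filter_upwards [ae_restrict_mem measurableSet_Ioi] with a (ha : 0 < a)
    have weight_ne_zero : ENNReal.ofReal (a ^ (γ - 1) * exp (-(r ^ 2 * a))) ≠ 0 := by
      rw [Ne, ENNReal.ofReal_eq_zero, not_le]; positivity
    exact (ENNReal.mul_lt_mul_iff_right weight_ne_zero ENNReal.ofReal_ne_top).mpr
      ((ENNReal.ofReal_lt_ofReal_iff (periodizedGaussian_pos ha t)).mpr
        (periodizedGaussian_lt_of_cos_lt ha h))

end PeriodizedKernel

section KernelEnergy

variable {X : Type*} [MeasurableSpace X] {μ : Measure X} {K : X → X → ℝ≥0∞} {v w : X → ℝ}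

/-- The nonlocal energy `∬ |w x - w y| K(x, y) dμ(x) dμ(y)`. -/
noncomputable def kernelEnergy (K : X → X → ℝ≥0∞) (μ : Measure X) (w : X → ℝ) : ℝ≥0∞ :=
  ∫⁻ p, ENNReal.ofReal |w p.1 - w p.2| * K p.1 p.2 ∂μ.prod μ

lemma measurable_ofReal_abs_sub_mul (hK : Measurable K.uncurry) (hw : Measurable w) :
    Measurable fun p : X × X => ENNReal.ofReal |w p.1 - w p.2| * K p.1 p.2 := by
  have hK' : Measurable fun p : X × X => K p.1 p.2 := hK
  fun_prop

lemma kernelEnergy_mono (h : ∀ x y, |v x - v y| ≤ |w x - w y|) :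
    kernelEnergy K μ v ≤ kernelEnergy K μ w :=
  lintegral_mono fun p => mul_le_mul_left (ENNReal.ofReal_le_ofReal (h p.1 p.2)) _

lemma kernelEnergy_abs_le : kernelEnergy K μ (fun x => |w x|) ≤ kernelEnergy K μ w :=
  kernelEnergy_mono fun _ _ => abs_abs_sub_abs_le _ _

lemma ae_abs_sub_abs_eq_of_kernelEnergy_abs_eq (hK : Measurable K.uncurry)
    (hw : Measurable w) (hfin : kernelEnergy K μ w ≠ ⊤)
    (h : kernelEnergy K μ (fun x => |w x|) = kernelEnergy K μ w) :
    ∀ᵐ p ∂μ.prod μ, K p.1 p.2 ≠ 0 → abs (|w p.1| - |w p.2|) = |w p.1 - w p.2| := by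
  have hle : ∀ p : X × X, ENNReal.ofReal (abs (|w p.1| - |w p.2|)) * K p.1 p.2 ≤
      ENNReal.ofReal |w p.1 - w p.2| * K p.1 p.2 := fun p =>
    mul_le_mul_left (ENNReal.ofReal_le_ofReal (abs_abs_sub_abs_le _ _)) _
  have hm := measurable_ofReal_abs_sub_mul hK hw
  filter_upwards [ae_eq_of_ae_le_of_lintegral_le (ae_of_all _ hle) (h.trans_ne hfin)
    hm.aemeasurable h.ge, ae_lt_top hm hfin] with p hp hp_lt hK0
  by_contra hne
  have hlt := (abs_abs_sub_abs_le (w p.1) (w p.2)).lt_of_ne hne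
  have hKtop : K p.1 p.2 ≠ ⊤ := fun hK => hp_lt.ne <| by
    rw [hK, ENNReal.mul_top (ENNReal.ofReal_pos.2 ((abs_nonneg _).trans_lt hlt)).ne']
  have hmul := ENNReal.mul_left_strictMono hK0 hKtop
    ((ENNReal.ofReal_lt_ofReal_iff_of_nonneg (abs_nonneg _)).2 hlt)
  exact hmul.ne (by simpa [mul_comm] using hp)

lemma kernelEnergy_congr_ae (h : v =ᵐ[μ] w) :
    kernelEnergy K μ v = kernelEnergy K μ w := by
  refine lintegral_congr_ae ?_
  filter_upwards [Measure.quasiMeasurePreserving_fst.ae h, Measure.quasiMeasurePreserving_snd.ae h]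
    with p h₁ h₂
  rw [h₁, h₂]

lemma kernelEnergy_comp [SFinite μ] {e : X → X} (he : MeasurePreserving e μ μ)
    (hKe : ∀ x y, K (e x) (e y) = K x y) (hK : Measurable K.uncurry) (hw : Measurable w) :
    kernelEnergy K μ (w ∘ e) = kernelEnergy K μ w := by
  rw [kernelEnergy, kernelEnergy,
    ← (he.prod he).lintegral_comp (measurable_ofReal_abs_sub_mul hK hw)]
  simp only [Function.comp_apply, Prod.map, hKe]

lemma ofReal_abs_sub_eq_lintegral (a b : ℝ) : ENNReal.ofReal |a - b| =
    ∫⁻ τ, ENNReal.ofReal |(Iio a).indicator (fun _ => (1 : ℝ)) τ - (Iio b).indicator 1 τ| := by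
  have h : ∀ τ, ENNReal.ofReal |(Iio a).indicator (fun _ => (1 : ℝ)) τ - (Iio b).indicator 1 τ| =
      (Ico (min a b) (max a b)).indicator 1 τ := fun τ => by
    by_cases ha : τ < a <;> by_cases hb : τ < b <;> simp [indicator, ha, hb]
  simp_rw [h]
  rw [lintegral_indicator_one measurableSet_Ico, Real.volume_Ico, max_sub_min_eq_abs']

lemma kernelEnergy_eq_lintegral_superlevel [SFinite μ] (hK : Measurable K.uncurry)
    (hw : Measurable w) :
    kernelEnergy K μ w = ∫⁻ τ : ℝ, kernelEnergy K μ ({x | τ < w x}.indicator 1) := by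
  have hK' : Measurable fun p : X × X => K p.1 p.2 := hK
  have hind (i : X × X → X) (hi : Measurable i) :
      Measurable fun q : ℝ × X × X => {x | q.1 < w x}.indicator (1 : X → ℝ) (i q.2) := by
    have : MeasurableSet {q : ℝ × X × X | q.1 < w (i q.2)} :=
      measurableSet_lt (by fun_prop) (by fun_prop)
    exact (measurable_one (α := ℝ)).indicator this
  have h₁ := hind Prod.fst measurable_fst
  have h₂ := hind Prod.snd measurable_snd
  simp only [kernelEnergy]
  rw [lintegral_lintegral_swap (by fun_prop)]
  refine lintegral_congr fun p => ?_
  have hp₁ := h₁.comp (measurable_prodMk_right (y := p))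
  have hp₂ := h₂.comp (measurable_prodMk_right (y := p))
  rw [ofReal_abs_sub_eq_lintegral]
  exact (lintegral_mul_const _ (hp₁.sub hp₂).abs.ennreal_ofReal).symm

lemma kernelEnergy_le_of_tendsto {f : ℕ → X → ℝ} {C : ℝ≥0∞}
    (hK : Measurable K.uncurry) (hf : ∀ n, Measurable (f n))
    (hlim : ∀ x, Tendsto (fun n => f n x) atTop (𝓝 (w x))) (hC : ∀ n, kernelEnergy K μ (f n) ≤ C) :
    kernelEnergy K μ w ≤ C := by
  have hlsc : ∀ p : X × X, ENNReal.ofReal |w p.1 - w p.2| * K p.1 p.2 ≤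
      liminf (fun n => ENNReal.ofReal |f n p.1 - f n p.2| * K p.1 p.2) atTop := fun p => by
    obtain h | h := eq_or_ne (w p.1) (w p.2)
    · simp [h]
    · have h0 : ENNReal.ofReal |w p.1 - w p.2| ≠ 0 :=
        (ENNReal.ofReal_pos.2 (abs_pos.2 (sub_ne_zero.2 h))).ne'
      exact (ENNReal.Tendsto.mul_const (ENNReal.tendsto_ofReal ((hlim p.1).sub (hlim p.2)).abs)
        (Or.inl h0)).liminf_eq.ge
  calc kernelEnergy K μ w
      ≤ ∫⁻ p, liminf (fun n => ENNReal.ofReal |f n p.1 - f n p.2| * K p.1 p.2) atTop ∂μ.prod μ :=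
        lintegral_mono hlsc
    _ ≤ liminf (fun n => kernelEnergy K μ (f n)) atTop :=
        lintegral_liminf_le fun n => measurable_ofReal_abs_sub_mul hK (hf n)
    _ ≤ C := liminf_le_of_le (by isBoundedDefault) fun b hb => by
        obtain ⟨n, hn⟩ := hb.exists
        exact hn.trans (hC n)

end KernelEnergy

section FourPoint

variable {a a' b b' : ℝ} {k k' : ℝ≥0∞}

lemma abs_sub_add_abs_sub_le_of_le (ha : a ≤ a') (hb : b' ≤ b) :
    |a - b'| + |a' - b| ≤ |a - b| + |a' - b'| := by
  rcases abs_cases (a - b') with h₁ | h₁ <;> rcases abs_cases (a' - b) with h₂ | h₂ <;>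
    linarith [le_abs_self (a - b), neg_abs_le (a - b), le_abs_self (a' - b'), neg_abs_le (a' - b')]

lemma abs_sub_add_abs_sub_lt_of_max_lt_min (h : max a b' < min a' b) :
    |a - b'| + |a' - b| < |a - b| + |a' - b'| := by
  obtain ⟨⟨h₁, h₂⟩, h₃, h₄⟩ : (a < a' ∧ b' < a') ∧ a < b ∧ b' < b := by
    simpa only [max_lt_iff, lt_min_iff] using h
  rcases abs_cases (a - b') with h₅ | h₅ <;> rcases abs_cases (a' - b) with h₆ | h₆ <;>
    linarith [neg_abs_le (a - b), le_abs_self (a' - b')]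

lemma ofReal_abs_add_ofReal_abs (x y : ℝ) :
    ENNReal.ofReal |x| + ENNReal.ofReal |y| = ENNReal.ofReal (|x| + |y|) :=
  (ENNReal.ofReal_add (abs_nonneg x) (abs_nonneg y)).symm

lemma four_point_sorted_le (h : k' ≤ k) (a a' b b' : ℝ) :
    ENNReal.ofReal (|max a a' - max b b'| + |min a a' - min b b'|) * k +
      ENNReal.ofReal (|max a a' - min b b'| + |min a a' - max b b'|) * k' ≤
    ENNReal.ofReal (|a - b| + |a' - b'|) * k + ENNReal.ofReal (|a - b'| + |a' - b|) * k' := by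
  have swap : ∀ {a a' b b' : ℝ}, a ≤ a' → b' ≤ b →
      ENNReal.ofReal (|a' - b| + |a - b'|) * k + ENNReal.ofReal (|a' - b'| + |a - b|) * k' ≤
      ENNReal.ofReal (|a - b| + |a' - b'|) * k + ENNReal.ofReal (|a - b'| + |a' - b|) * k' := by
    intro a a' b b' ha hb
    obtain ⟨d, hd⟩ := exists_add_of_le
      (ENNReal.ofReal_le_ofReal (abs_sub_add_abs_sub_le_of_le ha hb))
    rw [add_comm |a' - b|, add_comm |a' - b'|, hd, add_mul, add_mul, add_right_comm, ← add_assoc]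
    gcongr
  rcases le_total a a' with ha | ha <;> rcases le_total b b' with hb | hb <;>
    simp only [max_eq_left, max_eq_right, min_eq_left, min_eq_right, ha, hb]
  · exact (by ring_nf : _ = _).le
  · exact swap ha hb
  · exact (swap ha hb).trans_eq (by ring_nf)
  · exact le_rfl

lemma four_point_sorted_lt (h : k' < k) (hsep : max a b' < min a' b)
    (hfin : ENNReal.ofReal (|a - b| + |a' - b'|) * k +
      ENNReal.ofReal (|a - b'| + |a' - b|) * k' ≠ ⊤) :
    ENNReal.ofReal (|max a a' - max b b'| + |min a a' - min b b'|) * k +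
      ENNReal.ofReal (|max a a' - min b b'| + |min a a' - max b b'|) * k' <
    ENNReal.ofReal (|a - b| + |a' - b'|) * k + ENNReal.ofReal (|a - b'| + |a' - b|) * k' := by
  have hlt := abs_sub_add_abs_sub_lt_of_max_lt_min hsep
  have hk : k ≠ ⊤ := fun hk => hfin <| by
    rw [hk, ENNReal.mul_top (ENNReal.ofReal_pos.2 ((by positivity : (0 : ℝ) ≤ _).trans_lt hlt)).ne',
      top_add]
  lift k to NNReal using hk
  lift k' to NNReal using h.ne_top
  have ha : a ≤ a' := ((le_max_left _ _).trans_lt (hsep.trans_le (min_le_left _ _))).le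
  have hb : b' ≤ b := ((le_max_right _ _).trans_lt (hsep.trans_le (min_le_right _ _))).le
  simp only [max_eq_left, max_eq_right, min_eq_left, min_eq_right, ha, hb, ENNReal.ofReal]
  norm_cast at h ⊢
  rw [add_comm |a' - b|, add_comm |a' - b'|]
  exact (mul_add_mul_lt_mul_add_mul
    ((Real.toNNReal_lt_toNNReal_iff_of_nonneg (by positivity)).2 hlt) h).trans_eq (add_comm _ _)

end FourPoint

section Polarization

variable {X : Type*} {σ : X → X} {H : Set X} {w : X → ℝ} {x y : X}

/-- `H` is a closed half-space for the reflection `σ`: together, `H` and `σ '' H` cover the space,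
and they meet only in fixed points of `σ`. -/
structure IsHalfSpace (σ : X → X) (H : Set X) : Prop where
  involutive : Function.Involutive σ
  mem_or_mem : ∀ x, x ∈ H ∨ σ x ∈ H
  apply_eq_self : ∀ x ∈ H, σ x ∈ H → σ x = x

open Classical in
/-- The polarization (two-point rearrangement) of `w`: it moves the larger of the values of `w` at
`x` and `σ x` to the half-space `H`. -/
noncomputable def polarization (σ : X → X) (H : Set X) (w : X → ℝ) (x : X) : ℝ :=
  if x ∈ H then max (w x) (w (σ x)) else min (w x) (w (σ x))

lemma polarization_of_mem (hx : x ∈ H) : polarization σ H w x = max (w x) (w (σ x)) := if_pos hx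

lemma IsHalfSpace.polarization_apply (hH : IsHalfSpace σ H) (hx : x ∈ H) :
    polarization σ H w (σ x) = min (w x) (w (σ x)) := by
  by_cases hσx : σ x ∈ H
  · rw [hH.apply_eq_self x hx hσx, polarization_of_mem hx, hH.apply_eq_self x hx hσx, max_self,
      min_self]
  · rw [polarization, if_neg hσx, hH.involutive, min_comm]

lemma IsHalfSpace.forall_of_forall_mem (hH : IsHalfSpace σ H) {P : X → Prop}
    (hσ : ∀ x, P (σ x) → P x) (h : ∀ x ∈ H, P x) (x : X) : P x :=
  (hH.mem_or_mem x).elim (h x) fun hx => hσ x (h _ hx)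

lemma IsHalfSpace.map_polarization_add (hH : IsHalfSpace σ H) {M : Type*} [AddCommMagma M]
    (f : ℝ → M) (w : X → ℝ) (x : X) :
    f (polarization σ H w x) + f (polarization σ H w (σ x)) = f (w x) + f (w (σ x)) := by
  induction x using hH.forall_of_forall_mem with
  | hσ x hx => rwa [hH.involutive, add_comm, add_comm (f (w (σ x)))] at hx
  | h x hx =>
    rw [polarization_of_mem hx, hH.polarization_apply hx]
    rcases le_total (w x) (w (σ x)) with h | h <;> simp [h, add_comm]

lemma measurable_polarization [MeasurableSpace X] (hσ : Measurable σ) (hH : MeasurableSet H)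
    (hw : Measurable w) : Measurable (polarization σ H w) :=
  Measurable.ite hH (hw.max (hw.comp hσ)) (hw.min (hw.comp hσ))

/-- A kernel is compatible with the half-space `H` of `σ` if it is invariant under `σ` and decreases
when one of two points of `H` is reflected. -/
structure IsReflectionKernel (K : X → X → ℝ≥0∞) (σ : X → X) (H : Set X) : Prop extends
    IsHalfSpace σ H where
  apply_apply : ∀ x y, K (σ x) (σ y) = K x y
  apply_right_le : ∀ x ∈ H, ∀ y ∈ H, K x (σ y) ≤ K x y

variable {K : X → X → ℝ≥0∞}

/-- The sum of `|w x - w y| K(x, y)` over the orbit `{x, σ x} × {y, σ y}`. -/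
noncomputable def orbitSum (K : X → X → ℝ≥0∞) (σ : X → X) (w : X → ℝ) (x y : X) : ℝ≥0∞ :=
  ENNReal.ofReal (|w x - w y| + |w (σ x) - w (σ y)|) * K x y +
    ENNReal.ofReal (|w x - w (σ y)| + |w (σ x) - w y|) * K x (σ y)

lemma IsReflectionKernel.apply_left (hK : IsReflectionKernel K σ H) (x y : X) :
    K (σ x) y = K x (σ y) := by
  rw [← hK.apply_apply, hK.involutive]

lemma IsReflectionKernel.orbitSum_apply_left (hK : IsReflectionKernel K σ H) (x y : X) :
    orbitSum K σ w (σ x) y = orbitSum K σ w x y := by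
  simp only [orbitSum, hK.apply_left, hK.involutive _]
  ring_nf

lemma IsReflectionKernel.orbitSum_apply_right (hK : IsReflectionKernel K σ H) (x y : X) :
    orbitSum K σ w x (σ y) = orbitSum K σ w x y := by
  simp only [orbitSum, hK.involutive _]
  ring_nf

lemma IsReflectionKernel.orbitSum_polarization_le (hK : IsReflectionKernel K σ H) (x y : X) :
    orbitSum K σ (polarization σ H w) x y ≤ orbitSum K σ w x y := by
  induction x using hK.forall_of_forall_mem with
  | hσ x hx => simpa only [hK.orbitSum_apply_left] using hx
  | h x hx =>
    induction y using hK.forall_of_forall_mem with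
    | hσ y hy => simpa only [hK.orbitSum_apply_right] using hy
    | h y hy =>
      simp only [orbitSum, polarization_of_mem hx, polarization_of_mem hy, hK.polarization_apply hx,
        hK.polarization_apply hy]
      exact four_point_sorted_le (hK.apply_right_le x hx y hy) _ _ _ _

lemma IsReflectionKernel.orbitSum_polarization_lt (hK : IsReflectionKernel K σ H) (hx : x ∈ H)
    (hy : y ∈ H) (hlt : K x (σ y) < K x y) (hsep : max (w x) (w (σ y)) < min (w (σ x)) (w y))
    (hfin : orbitSum K σ w x y ≠ ⊤) :
    orbitSum K σ (polarization σ H w) x y < orbitSum K σ w x y := by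
  simp only [orbitSum, polarization_of_mem hx, polarization_of_mem hy, hK.polarization_apply hx,
    hK.polarization_apply hy]
  exact four_point_sorted_lt hlt hsep hfin

variable [MeasurableSpace X] {μ : Measure X} [SFinite μ]

lemma measurable_orbitSum (hKm : Measurable K.uncurry) (hσ : Measurable σ) (hw : Measurable w) :
    Measurable fun p : X × X => orbitSum K σ w p.1 p.2 := by
  have h₁ : Measurable fun p : X × X => K p.1 p.2 := hKm
  have : Measurable fun p : X × X => K p.1 (σ p.2) :=
    h₁.comp (measurable_fst.prodMk (hσ.comp measurable_snd))
  unfold orbitSum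
  fun_prop

lemma IsReflectionKernel.lintegral_orbitSum (hK : IsReflectionKernel K σ H)
    (hKm : Measurable K.uncurry) (hσ : MeasurePreserving σ μ μ) (hw : Measurable w) :
    ∫⁻ p, orbitSum K σ w p.1 p.2 ∂μ.prod μ = 4 * kernelEnergy K μ w := by
  set f : X × X → ℝ≥0∞ := fun p => ENNReal.ofReal |w p.1 - w p.2| * K p.1 p.2 with hf_def
  have hf : Measurable f := measurable_ofReal_abs_sub_mul hKm hw
  have hleft := hσ.prod (MeasurePreserving.id μ)
  have hright := (MeasurePreserving.id μ).prod hσ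
  have hboth := hσ.prod hσ
  have horbit : ∀ p : X × X, orbitSum K σ w p.1 p.2 = (f p + f (Prod.map σ σ p)) +
      (f (Prod.map id σ p) + f (Prod.map σ id p)) := fun p => by
    simp only [orbitSum, hf_def, Prod.map, id, hK.apply_apply, hK.apply_left,
      ← ofReal_abs_add_ofReal_abs, add_mul]
  have hfright : Measurable fun p => f (Prod.map id σ p) := hf.comp hright.measurable
  have hdiag : Measurable fun p => f p + f (Prod.map σ σ p) := hf.add (hf.comp hboth.measurable)
  rw [lintegral_congr horbit, lintegral_add_left hdiag, lintegral_add_left hf,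
    lintegral_add_left hfright, hboth.lintegral_comp hf, hright.lintegral_comp hf,
    hleft.lintegral_comp hf, kernelEnergy]
  ring

lemma IsReflectionKernel.kernelEnergy_polarization_le (hK : IsReflectionKernel K σ H)
    (hKm : Measurable K.uncurry) (hσ : MeasurePreserving σ μ μ) (hH : MeasurableSet H)
    (hw : Measurable w) : kernelEnergy K μ (polarization σ H w) ≤ kernelEnergy K μ w := by
  rw [← ENNReal.mul_le_mul_iff_right (a := 4) (by simp) (by simp),
    ← hK.lintegral_orbitSum hKm hσ hw,
    ← hK.lintegral_orbitSum hKm hσ (measurable_polarization hσ.measurable hH hw)]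
  exact lintegral_mono fun p => hK.orbitSum_polarization_le p.1 p.2

lemma IsReflectionKernel.ae_not_separated_of_kernelEnergy_le (hK : IsReflectionKernel K σ H)
    (hKm : Measurable K.uncurry) (hσ : MeasurePreserving σ μ μ) (hH : MeasurableSet H)
    (hw : Measurable w) (hfin : kernelEnergy K μ w ≠ ⊤)
    (h : kernelEnergy K μ w ≤ kernelEnergy K μ (polarization σ H w)) :
    ∀ᵐ p ∂μ.prod μ, p.1 ∈ H → p.2 ∈ H → K p.1 (σ p.2) < K p.1 p.2 →
      ¬ max (w p.1) (w (σ p.2)) < min (w (σ p.1)) (w p.2) := by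
  have hpol := measurable_polarization hσ.measurable hH hw
  have hm := measurable_orbitSum hKm hσ.measurable hw
  have hint := hK.lintegral_orbitSum hKm hσ hw
  have hintp := hK.lintegral_orbitSum hKm hσ hpol
  have hne : ∫⁻ p, orbitSum K σ w p.1 p.2 ∂μ.prod μ ≠ ⊤ := by
    rw [hint]
    exact ENNReal.mul_ne_top (by simp) hfin
  have hle : ∀ p : X × X, orbitSum K σ (polarization σ H w) p.1 p.2 ≤ orbitSum K σ w p.1 p.2 :=
    fun p => hK.orbitSum_polarization_le p.1 p.2
  have hge : ∫⁻ p, orbitSum K σ w p.1 p.2 ∂μ.prod μ ≤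
      ∫⁻ p, orbitSum K σ (polarization σ H w) p.1 p.2 ∂μ.prod μ := by
    rw [hint, hintp]
    gcongr
  filter_upwards [ae_eq_of_ae_le_of_lintegral_le (ae_of_all _ hle)
    (ne_top_of_le_ne_top hne (lintegral_mono hle)) hm.aemeasurable hge, ae_lt_top hm hne]
    with p hp hp_lt h₁ h₂ hlt hsep
  exact (hK.orbitSum_polarization_lt h₁ h₂ hlt hsep hp_lt.ne).ne hp

end Polarization

section Angle

instance fact_two_pi_pos : Fact (0 < 2 * π) := ⟨two_pi_pos⟩

/-- The arc length measure, of total mass `2π`. -/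
noncomputable instance : MeasureSpace Angle := inferInstanceAs (MeasureSpace (AddCircle (2 * π)))

instance : BorelSpace Angle := inferInstanceAs (BorelSpace (AddCircle (2 * π)))

instance : CompactSpace Angle := inferInstanceAs (CompactSpace (AddCircle (2 * π)))

instance : (volume : Measure Angle).IsAddHaarMeasure :=
  inferInstanceAs (volume : Measure (AddCircle (2 * π))).IsAddHaarMeasure

variable {c θ φ : Angle}

lemma cos_sub_sub_cos_sub_reflect (c θ φ : Angle) :
    (θ - φ).cos - (θ - (c + c - φ)).cos = 2 * ((θ - c).sin * (φ - c).sin) := by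
  have h₁ : θ - φ = θ - c + -(φ - c) := by abel
  have h₂ : θ - (c + c - φ) = θ - c + (φ - c) := by abel
  rw [h₁, h₂, Angle.cos_add, Angle.cos_add, Angle.cos_neg, Angle.sin_neg]
  ring

lemma sin_reflect_sub (c θ : Angle) : (c + c - θ - c).sin = -(θ - c).sin := by
  rw [← Angle.sin_neg]
  congr 1
  abel

lemma reflect_eq_self_of_sin_eq_zero (h : (θ - c).sin = 0) : c + c - θ = θ := by
  have h₂ : (θ - c) + (θ - c) = 0 := by
    rw [← two_nsmul, Angle.two_nsmul_eq_zero_iff]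
    exact Angle.sin_eq_zero_iff.1 h
  rw [← sub_eq_zero, ← neg_eq_zero, ← h₂]
  abel

lemma exists_add_self_eq (θ : Angle) : ∃ c, c + c = θ :=
  ⟨(θ.toReal / 2 : ℝ), by rw [← Angle.coe_add, add_halves, Angle.coe_toReal]⟩

lemma exists_cos_ne_neg_one_of_mem_nhds {s : Set Angle} (hs : s ∈ 𝓝 θ) :
    ∃ φ ∈ s, φ.cos ≠ -1 := by
  by_cases hθ : θ.cos = -1
  · have hsin : θ.sin = 0 := by nlinarith [Angle.cos_sq_add_sin_sq θ]
    have hlim : Tendsto (fun t : ℝ => θ + (t : Angle)) (𝓝[>] 0) (𝓝 θ) := by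
      have : Continuous fun t : ℝ => θ + (t : Angle) := by fun_prop
      simpa using (this.tendsto 0).mono_left nhdsWithin_le_nhds
    obtain ⟨t, hts, ht⟩ := ((hlim.eventually hs).and (Ioo_mem_nhdsGT two_pi_pos)).exists
    refine ⟨_, hts, fun h => ?_⟩
    rw [Angle.cos_add, hθ, hsin, Angle.cos_coe] at h
    have := (cos_eq_one_iff_of_lt_of_lt (by linarith [ht.1, two_pi_pos]) ht.2).1 (by linarith)
    exact ht.1.ne' this
  · exact ⟨θ, mem_of_mem_nhds hs, hθ⟩

end Angle

section Reflection

variable {E : Type*} {c θ : Angle} {x y : Angle × E}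

/-- The reflection of the first variable which fixes the angle `c`. -/
noncomputable def reflect (c : Angle) (x : Angle × E) : Angle × E := (c + c - x.1, x.2)

/-- The half-space of points whose first variable lies on the closed half circle that starts
counterclockwise at `c`. -/
def halfCircle (c : Angle) : Set (Angle × E) := {x | 0 ≤ (x.1 - c).sin}

lemma isHalfSpace_halfCircle (c : Angle) :
    IsHalfSpace (reflect c) (halfCircle c : Set (Angle × E)) where
  involutive x := Prod.ext (by simp [reflect]) rfl
  mem_or_mem x := by
    simp only [halfCircle, reflect, mem_ofPred_eq, sin_reflect_sub, Left.nonneg_neg_iff]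
    exact le_total _ _
  apply_eq_self x hx hx' := by
    simp only [halfCircle, reflect, mem_ofPred_eq, sin_reflect_sub, Left.nonneg_neg_iff] at hx hx'
    exact Prod.ext (reflect_eq_self_of_sin_eq_zero (hx'.antisymm hx)) rfl

lemma continuous_reflect [TopologicalSpace E] (c : Angle) :
    Continuous (reflect c : Angle × E → Angle × E) := by
  unfold reflect
  fun_prop

lemma isClosed_halfCircle [TopologicalSpace E] (c : Angle) :
    IsClosed (halfCircle c : Set (Angle × E)) :=
  isClosed_le continuous_const (Angle.continuous_sin.comp (by fun_prop))

lemma measurableSet_halfCircle [MeasurableSpace E] (c : Angle) :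
    MeasurableSet (halfCircle c : Set (Angle × E)) :=
  measurableSet_le measurable_const (Angle.continuous_sin.measurable.comp (by fun_prop))

lemma measurePreserving_reflect [MeasurableSpace E] (ν : Measure E) [SFinite ν] (c : Angle) :
    MeasurePreserving (reflect c) ((volume : Measure Angle).prod ν) (volume.prod ν) :=
  (Measure.measurePreserving_sub_left volume (c + c)).prod (MeasurePreserving.id ν)

lemma measurePreserving_sub_fst [MeasurableSpace E] (ν : Measure E) [SFinite ν] (a : Angle) :
    MeasurePreserving (fun x : Angle × E => (x.1 - a, x.2)) (volume.prod ν) (volume.prod ν) :=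
  (measurePreserving_sub_right volume a).prod (MeasurePreserving.id ν)

lemma reflect_add_pi (c : Angle) : (reflect (c + π) : Angle × E → Angle × E) = reflect c := by
  ext x : 1
  simp only [reflect, add_add_add_comm, Angle.coe_pi_add_coe_pi, add_zero]

lemma sin_sub_add_pi (θ c : Angle) : (θ - (c + π)).sin = -(θ - c).sin := by
  rw [← sub_sub, Angle.sin_sub_pi]

lemma cos_sub_cos_reflect (c : Angle) (x : Angle × E) :
    x.1.cos - (reflect c x).1.cos = 2 * ((0 - c).sin * (x.1 - c).sin) := by
  rw [← cos_sub_sub_cos_sub_reflect, zero_sub, zero_sub, Angle.cos_neg, Angle.cos_neg, reflect]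

lemma cos_reflect_le (hc : 0 ≤ (0 - c).sin) (hx : x ∈ halfCircle c) :
    (reflect c x).1.cos ≤ x.1.cos := by
  have : 0 ≤ (x.1 - c).sin := hx
  linarith [cos_sub_cos_reflect c x, mul_nonneg hc this]

end Reflection

section CosMonotone

variable {E : Type*} {K : Angle → E → E → ℝ≥0∞} {c θ φ : Angle} {y y' : E} {w : Angle × E → ℝ}

/-- A kernel whose dependence on the angle is through a strictly increasing function of its
cosine. -/
structure IsCosMonotone [MeasurableSpace E] (K : Angle → E → E → ℝ≥0∞) : Prop where
  measurable : Measurable fun p : Angle × E × E => K p.1 p.2.1 p.2.2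
  lt_iff : ∀ θ φ y y', K θ y y' < K φ y y' ↔ θ.cos < φ.cos

/-- The kernel on `Angle × E` that is translation invariant in the first variable. -/
noncomputable def angularKernel (K : Angle → E → E → ℝ≥0∞) (x y : Angle × E) : ℝ≥0∞ :=
  K (x.1 - y.1) x.2 y.2

section MeasurableSpace

variable [MeasurableSpace E]

lemma IsCosMonotone.le_iff (hK : IsCosMonotone K) : K θ y y' ≤ K φ y y' ↔ θ.cos ≤ φ.cos := by
  rw [← not_lt, ← not_lt, hK.lt_iff]

lemma IsCosMonotone.eq_of_cos_eq (hK : IsCosMonotone K) (h : θ.cos = φ.cos) : K θ y y' = K φ y y' :=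
  (hK.le_iff.2 h.le).antisymm (hK.le_iff.2 h.ge)

lemma IsCosMonotone.ne_zero (hK : IsCosMonotone K) (h : θ.cos ≠ -1) : K θ y y' ≠ 0 := by
  have hlt : (π : Angle).cos < θ.cos := by
    rw [Angle.cos_coe_pi]
    exact (neg_one_le_cos θ.toReal |>.trans_eq (Angle.cos_toReal θ)).lt_of_ne' h
  exact (pos_of_gt ((hK.lt_iff _ _ y y').2 hlt)).ne'

lemma measurable_angularKernel (hK : Measurable fun p : Angle × E × E => K p.1 p.2.1 p.2.2) :
    Measurable (angularKernel K).uncurry :=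
  hK.comp (by fun_prop :
    Measurable fun p : (Angle × E) × Angle × E => (p.1.1 - p.2.1, p.1.2, p.2.2))

lemma IsCosMonotone.measurable_angularKernel (hK : IsCosMonotone K) :
    Measurable (angularKernel K).uncurry :=
  PeriodicRearrangement.measurable_angularKernel hK.measurable

lemma IsCosMonotone.isReflectionKernel (hK : IsCosMonotone K) (c : Angle) :
    IsReflectionKernel (angularKernel K) (reflect c) (halfCircle c) where
  toIsHalfSpace := isHalfSpace_halfCircle c
  apply_apply x y := hK.eq_of_cos_eq <| by
    rw [← Angle.cos_neg]
    congr 1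
    simp only [reflect]
    abel
  apply_right_le x hx y hy := hK.le_iff.2 <| by
    have := cos_sub_sub_cos_sub_reflect c x.1 y.1
    simp only [reflect]
    linarith [mul_nonneg (show 0 ≤ (x.1 - c).sin from hx) (show 0 ≤ (y.1 - c).sin from hy)]

lemma IsCosMonotone.angularKernel_reflect_lt (hK : IsCosMonotone K) {x y : Angle × E}
    (hx : 0 < (x.1 - c).sin) (hy : 0 < (y.1 - c).sin) :
    angularKernel K x (reflect c y) < angularKernel K x y :=
  (hK.lt_iff _ _ _ _).2 <| by
    have := cos_sub_sub_cos_sub_reflect c x.1 y.1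
    simp only [reflect]
    linarith [mul_pos hx hy]

end MeasurableSpace

variable [MeasureSpace E] [SFinite (volume : Measure E)]

lemma IsCosMonotone.kernelEnergy_comp_sub_fst (hK : IsCosMonotone K) (hw : Measurable w)
    (a : Angle) : kernelEnergy (angularKernel K) volume (fun x => w (x.1 - a, x.2)) =
      kernelEnergy (angularKernel K) volume w :=
  kernelEnergy_comp (measurePreserving_sub_fst volume a)
    (fun x y => by simp [angularKernel]) hK.measurable_angularKernel hw

lemma IsCosMonotone.kernelEnergy_polarization_le (hK : IsCosMonotone K) (hw : Measurable w)
    (c : Angle) :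
    kernelEnergy (angularKernel K) volume (polarization (reflect c) (halfCircle c) w) ≤
      kernelEnergy (angularKernel K) volume w :=
  (hK.isReflectionKernel c).kernelEnergy_polarization_le hK.measurable_angularKernel
    (measurePreserving_reflect volume c) (measurableSet_halfCircle c) hw

variable [TopologicalSpace E] [SecondCountableTopology E] [BorelSpace E]
  [(volume : Measure E).IsOpenPosMeasure]

lemma forall_mem_of_ae_of_isOpen_not {X : Type*} [TopologicalSpace X] [MeasurableSpace X]
    {μ : Measure X} [μ.IsOpenPosMeasure] {U : Set X} {P : X → Prop} (hU : IsOpen U)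
    (hP : IsOpen {x | ¬ P x}) (h : ∀ᵐ x ∂μ, x ∈ U → P x) : ∀ x ∈ U, P x := by
  have hempty := (hU.inter hP).eq_empty_of_measure_zero
    (measure_mono_null (fun x hx => by simpa using hx) (ae_iff.1 h))
  exact fun x hxU => by_contra fun hxP => hempty.le ⟨hxU, hxP⟩

lemma IsCosMonotone.eq_abs_or_eq_neg_abs (hK : IsCosMonotone K) (hw : Continuous w)
    (hfin : kernelEnergy (angularKernel K) volume w ≠ ⊤)
    (h : kernelEnergy (angularKernel K) volume (fun x => |w x|) =
      kernelEnergy (angularKernel K) volume w) :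
    (∀ x, w x = |w x|) ∨ ∀ x, w x = -|w x| := by
  have hcos : Continuous fun p : (Angle × E) × Angle × E => (p.1.1 - p.2.1).cos :=
    Angle.continuous_cos.comp (by fun_prop)
  have hae := ae_abs_sub_abs_eq_of_kernelEnergy_abs_eq hK.measurable_angularKernel hw.measurable
    hfin h
  have hsame : ∀ p ∈ {p : (Angle × E) × Angle × E | (p.1.1 - p.2.1).cos ≠ -1},
      abs (|w p.1| - |w p.2|) = |w p.1 - w p.2| :=
    forall_mem_of_ae_of_isOpen_not (isOpen_ne_fun hcos continuous_const)
      (isOpen_ne_fun (by fun_prop) (by fun_prop))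
      (hae.mono fun p hp hcos => hp (hK.ne_zero hcos))
  by_contra! hcon
  obtain ⟨⟨x, hx⟩, y, hy⟩ := hcon
  have hx : w x < 0 := not_le.1 fun h0 => hx (abs_of_nonneg h0).symm
  have hy : 0 < w y := not_le.1 fun h0 => hy (by rw [abs_of_nonpos h0, neg_neg])
  have hnhds : ∀ᶠ φ in 𝓝 (x.1 - y.1), w (φ + y.1, x.2) < 0 := by
    have : Continuous fun φ => w (φ + y.1, x.2) := by fun_prop
    exact this.continuousAt.eventually_lt_const (by simpa using hx)
  obtain ⟨φ, hφ, hφcos⟩ := exists_cos_ne_neg_one_of_mem_nhds hnhds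
  have hφ : w (φ + y.1, x.2) < 0 := hφ
  have : abs (|w (φ + y.1, x.2)| - |w y|) = |w (φ + y.1, x.2) - w y| :=
    hsame ((φ + y.1, x.2), y) (by simpa using hφcos)
  rw [abs_of_neg hφ, abs_of_pos hy,
    abs_of_neg (by linarith : w (φ + y.1, x.2) - w y < 0)] at this
  rcases abs_cases (-w (φ + y.1, x.2) - w y) with h | h <;> linarith

lemma IsCosMonotone.superlevel_polarized_or (hK : IsCosMonotone K) (hw : Continuous w)
    (hfin : kernelEnergy (angularKernel K) volume w ≠ ⊤) (c : Angle)
    (h : kernelEnergy (angularKernel K) volume w ≤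
      kernelEnergy (angularKernel K) volume (polarization (reflect c) (halfCircle c) w)) (τ : ℝ) :
    (∀ x ∈ halfCircle c, τ < w (reflect c x) → τ < w x) ∨
      ∀ x ∈ halfCircle c, τ < w x → τ < w (reflect c x) := by
  have hr := continuous_reflect (E := E) c
  have hsin : Continuous fun x : Angle × E => (x.1 - c).sin :=
    Angle.continuous_sin.comp (by fun_prop)
  have hnot : ∀ p ∈ {p : (Angle × E) × Angle × E | 0 < (p.1.1 - c).sin ∧ 0 < (p.2.1 - c).sin},
      ¬ max (w p.1) (w (reflect c p.2)) < min (w (reflect c p.1)) (w p.2) := by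
    refine forall_mem_of_ae_of_isOpen_not (μ := volume) ?_ ?_ ?_
    · exact (isOpen_lt continuous_const (hsin.comp continuous_fst)).inter
        (isOpen_lt continuous_const (hsin.comp continuous_snd))
    · simp only [not_not]
      exact isOpen_lt (by fun_prop) (by fun_prop)
    · filter_upwards [(hK.isReflectionKernel c).ae_not_separated_of_kernelEnergy_le
        hK.measurable_angularKernel (measurePreserving_reflect volume c)
        (measurableSet_halfCircle c) hw.measurable hfin h] with p hp hsin
      exact hp hsin.1.le hsin.2.le (hK.angularKernel_reflect_lt hsin.1 hsin.2)
  have sin_pos : ∀ x ∈ halfCircle c, w (reflect c x) ≠ w x → 0 < (x.1 - c).sin :=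
    fun x hx hne => lt_of_le_of_ne hx fun h0 =>
      hne (congrArg w (Prod.ext (reflect_eq_self_of_sin_eq_zero h0.symm) rfl))
  by_contra! hcon
  obtain ⟨⟨x, hx, hx₁, hx₂⟩, y, hy, hy₁, hy₂⟩ := hcon
  exact hnot (x, y) ⟨sin_pos x hx (hx₂.trans_lt hx₁).ne', sin_pos y hy (hy₂.trans_lt hy₁).ne⟩
    ((max_le hx₂ hy₂).trans_lt (lt_min hx₁ hy₁))

end CosMonotone

section PolarizationMoment

variable {X : Type*} {σ : X → X} {H : Set X} {f g w : X → ℝ} {x y : X}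

lemma polarization_comp_of_monotone {φ : ℝ → ℝ} (hφ : Monotone φ) :
    polarization σ H (φ ∘ w) = φ ∘ polarization σ H w := by
  ext x
  simp only [polarization, Function.comp_apply]
  split_ifs
  · exact (hφ.map_max).symm
  · exact (hφ.map_min).symm

lemma IsHalfSpace.polarization_eq_comp (hH : IsHalfSpace σ H) (h : ∀ x ∈ H, w x ≤ w (σ x)) :
    polarization σ H w = w ∘ σ := by
  ext x
  by_cases hx : x ∈ H
  · exact (polarization_of_mem hx).trans (max_eq_right (h x hx))
  · refine (if_neg hx).trans (min_eq_right ?_)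
    simpa only [hH.involutive x] using h _ ((hH.mem_or_mem x).resolve_left hx)

lemma IsHalfSpace.continuous_polarization [TopologicalSpace X] (hH : IsHalfSpace σ H)
    (hσ : Continuous σ) (hc : IsClosed H) (hw : Continuous w) :
    Continuous (polarization σ H w) := by
  classical
  refine continuous_if (fun x hx => ?_) (by fun_prop) (by fun_prop)
  have hx' : σ x ∈ H := by
    have hsub : Hᶜ ⊆ σ ⁻¹' H := fun y hy => (hH.mem_or_mem y).resolve_left hy
    rw [frontier_eq_closure_inter_closure] at hx
    exact closure_minimal hsub (hc.preimage hσ) hx.2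
  rw [hH.apply_eq_self x (hc.frontier_subset hx) hx', max_self, min_self]

lemma IsHalfSpace.polarization_le_add (hH : IsHalfSpace σ H) {R : X → X → Prop} {M : ℝ}
    (hσ : ∀ x y, R x y → R (σ x) (σ y)) (hmem : ∀ x ∈ H, ∀ y ∈ H, R x (σ y) → R x y)
    (h : ∀ x y, R x y → w x ≤ w y + M) (hxy : R x y) :
    polarization σ H w x ≤ polarization σ H w y + M := by
  have hσxy := hσ x y hxy
  have h₁ := h x y hxy
  have h₂ := h _ _ hσxy
  unfold polarization
  split_ifs with hx hy hy
  · exact (max_le_max h₁ h₂).trans_eq (max_add_add_right _ _ _)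
  · have hy' := (hH.mem_or_mem y).resolve_left hy
    have hcross : R x (σ y) := hmem x hx _ hy' (by rwa [hH.involutive])
    have hcross' : R (σ x) y := by simpa only [hH.involutive y] using hσ _ _ hcross
    rw [← min_add_add_right]
    exact max_le (le_min h₁ (h _ _ hcross)) (le_min (h _ _ hcross') h₂)
  · exact (min_le_left _ _).trans (h₁.trans (by gcongr; exact le_max_left _ _))
  · exact (min_le_min h₁ h₂).trans_eq (min_add_add_right _ _ _)

lemma IsHalfSpace.mul_add_mul_le_polarization (hH : IsHalfSpace σ H)
    (hg : ∀ x ∈ H, g (σ x) ≤ g x) (x : X) : w x * g x + w (σ x) * g (σ x) ≤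
      polarization σ H w x * g x + polarization σ H w (σ x) * g (σ x) := by
  induction x using hH.forall_of_forall_mem with
  | hσ x hx => rwa [hH.involutive, add_comm, add_comm (_ * g (σ x))] at hx
  | h x hx =>
    rw [polarization_of_mem hx, hH.polarization_apply hx]
    rcases le_total (w x) (w (σ x)) with h | h
    · rw [max_eq_right h, min_eq_left h]
      nlinarith [hg x hx]
    · rw [max_eq_left h, min_eq_right h]

variable [MeasurableSpace X] {μ : Measure X}

lemma IsHalfSpace.map_polarization (hH : IsHalfSpace σ H) (hσ : MeasurePreserving σ μ μ)
    (hHm : MeasurableSet H) (hw : Measurable w) :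
    μ.map (polarization σ H w) = μ.map w := by
  have hpol := measurable_polarization hσ.measurable hHm hw
  have htwo : ∀ {v : X → ℝ} {s : Set ℝ}, Measurable v → MeasurableSet s → 2 * μ.map v s =
      ∫⁻ x, s.indicator 1 (v x) + s.indicator 1 (v (σ x)) ∂μ := fun {v s} hv hs => by
    have hind : Measurable fun x => s.indicator (1 : ℝ → ℝ≥0∞) (v x) :=
      (measurable_one.indicator hs).comp hv
    rw [lintegral_add_left hind, hσ.lintegral_comp hind, ← two_mul, ← lintegral_indicator_one hs,
      lintegral_map (measurable_one.indicator hs) hv]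
  ext s hs
  rw [← ENNReal.mul_right_inj (a := 2) (by simp) (by simp), htwo hpol hs, htwo hw hs]
  simp_rw [hH.map_polarization_add]

lemma IsHalfSpace.ae_apply_le_of_integral_polarization_mul_le (hH : IsHalfSpace σ H)
    (hσ : MeasurePreserving σ μ μ) (hg : ∀ x ∈ H, g (σ x) ≤ g x)
    (hint : Integrable (fun x => w x * g x) μ)
    (hpol : Integrable (fun x => polarization σ H w x * g x) μ)
    (hle : ∫ x, polarization σ H w x * g x ∂μ ≤ ∫ x, w x * g x ∂μ) :
    ∀ᵐ x ∂μ, g (σ x) < g x → w (σ x) ≤ w x := by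
  have hsum : ∀ {v : X → ℝ}, Integrable (fun x => v x * g x) μ →
      Integrable (fun x => v x * g x + v (σ x) * g (σ x)) μ ∧
        ∫ x, v x * g x + v (σ x) * g (σ x) ∂μ = 2 * ∫ x, v x * g x ∂μ := fun {v} hv => by
    have hvσ : Integrable (fun x => v (σ x) * g (σ x)) μ := hσ.integrable_comp_of_integrable hv
    have hcomp : ∫ x, v (σ x) * g (σ x) ∂μ = ∫ x, v x * g x ∂μ := by
      have := hv.aestronglyMeasurable
      rw [← hσ.map_eq] at this
      rw [← integral_map hσ.aemeasurable this, hσ.map_eq]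
    exact ⟨hv.add hvσ, by rw [integral_add hv hvσ, hcomp, two_mul]⟩
  have hae := (integral_eq_iff_of_ae_le (hsum hint).1 (hsum hpol).1
    (ae_of_all _ (hH.mul_add_mul_le_polarization hg))).1 <|
      (integral_mono (hsum hint).1 (hsum hpol).1 (hH.mul_add_mul_le_polarization hg)).antisymm <| by
        rw [(hsum hint).2, (hsum hpol).2]
        linarith
  filter_upwards [hae] with x hx_eq hlt
  have hx : x ∈ H := (hH.mem_or_mem x).resolve_right fun hx =>
    hlt.not_ge (by simpa only [hH.involutive x] using hg _ hx)
  rw [polarization_of_mem hx, hH.polarization_apply hx] at hx_eq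
  by_contra! h
  rw [max_eq_right h.le, min_eq_left h.le] at hx_eq
  nlinarith

end PolarizationMoment

section Compactness

variable {X α : Type*} [TopologicalSpace X]

lemma isCompact_of_isClosed_of_equicontinuous [CompactlyCoherentSpace X] [UniformSpace α]
    [T2Space α] {S : Set C(X, α)} (hS : IsClosed S) (hequi : Equicontinuous ((↑) : S → X → α))
    (hcpt : ∀ x, ∃ Q : Set α, IsCompact Q ∧ ∀ f ∈ S, f x ∈ Q) : IsCompact S := by
  have hemb : IsClosedEmbedding
      (ContinuousMap.toUniformOnFunIsCompact : C(X, α) → UniformOnFun X α {K | IsCompact K}) :=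
    ⟨ContinuousMap.isUniformEmbedding_toUniformOnFunIsCompact.isEmbedding, by
      rw [ContinuousMap.range_toUniformOnFunIsCompact]
      exact UniformOnFun.isClosed_setOfPred_continuous CompactlyCoherentSpace.isCoherentWith⟩
  rw [← hS.closure_eq]
  exact ArzelaAscoli.isCompact_closure_of_isClosedEmbedding (F := fun f : C(X, α) => ⇑f)
    (fun _ hK => hK) hemb (fun K _ => hequi.equicontinuousOn K) fun _ _ x _ => hcpt x

variable [WeaklyLocallyCompactSpace X] [SigmaCompactSpace X] [MeasurableSpace X]
  [OpensMeasurableSpace X] {μ : Measure X}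

lemma continuous_integral_comp_mul [IsFiniteMeasure μ] {f : ℝ → ℝ} (hf : Continuous f) {g : X → ℝ}
    (hg : Continuous g) {A B : ℝ} (hA : ∀ t, ‖f t‖ ≤ A) (hB : ∀ x, ‖g x‖ ≤ B) :
    Continuous fun w : C(X, ℝ) => ∫ x, f (w x) * g x ∂μ := by
  refine continuous_of_dominated (bound := fun _ => A * B) (fun w => ?_) (fun w => ?_)
    (integrable_const _) (ae_of_all _ fun x => ?_)
  · exact (by fun_prop : Continuous fun x => f (w x) * g x).measurable.aestronglyMeasurable
  · refine ae_of_all _ fun x => (norm_mul_le _ _).trans ?_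
    gcongr
    · exact (norm_nonneg _).trans (hA 0)
    · exact hA _
    · exact hB x
  · fun_prop

lemma isClosed_setOfPred_map_eq [IsFiniteMeasure μ] (v : C(X, ℝ)) :
    IsClosed {w : C(X, ℝ) | μ.map w = μ.map v} := by
  have hset : {w : C(X, ℝ) | μ.map w = μ.map v} = ⋂ f : BoundedContinuousFunction ℝ ℝ,
      {w : C(X, ℝ) | ∫ x, f (w x) * 1 ∂μ = ∫ x, f (v x) ∂μ} := by
    have hmap : ∀ (w : C(X, ℝ)) (f : BoundedContinuousFunction ℝ ℝ),
        ∫ t, f t ∂μ.map w = ∫ x, f (w x) ∂μ := fun w f =>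
      integral_map w.continuous.measurable.aemeasurable f.continuous.aestronglyMeasurable
    ext w
    simp only [mem_iInter, mem_ofPred_eq, mul_one, ← hmap]
    exact ⟨fun h f => by rw [h], ext_of_forall_integral_eq_of_IsFiniteMeasure⟩
  rw [hset]
  exact isClosed_iInter fun f => isClosed_eq (continuous_integral_comp_mul f.continuous
    continuous_const f.norm_coe_le_norm fun _ => (norm_one (α := ℝ)).le) continuous_const

lemma isClosed_setOfPred_kernelEnergy_le {K : X → X → ℝ≥0∞} (hK : Measurable K.uncurry)
    (C : ℝ≥0∞) : IsClosed {w : C(X, ℝ) | kernelEnergy K μ w ≤ C} := by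
  refine IsSeqClosed.isClosed fun f w hf hlim => ?_
  exact kernelEnergy_le_of_tendsto hK (fun n => (f n).continuous.measurable)
    (fun x => ((continuous_eval_const x).tendsto w).comp hlim) hf

end Compactness

lemma exists_forall_abs_sub_lt {E : Type*} [TopologicalSpace E] (v : C(Angle × E, ℝ)) (y : E)
    {ε : ℝ} (hε : 0 < ε) :
    ∃ κ < 1, ∀ᶠ y' in 𝓝 y, ∀ θ θ', κ ≤ (θ - θ').cos → |v (θ, y') - v (θ', y)| < ε := by
  have hcos : Continuous fun q : (ℝ × E) × Angle × Angle => (q.2.1 - q.2.2).cos :=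
    Angle.continuous_cos.comp (by fun_prop)
  have hloc : ∀ p ∈ (univ : Set (Angle × Angle)), ∀ᶠ q : (ℝ × E) × Angle × Angle in 𝓝 ((1, y), p),
      q.1.1 ≤ (q.2.1 - q.2.2).cos → |v (q.2.1, q.1.2) - v (q.2.2, y)| < ε := fun p _ => by
    obtain ⟨θ, θ'⟩ := p
    obtain rfl | hne := eq_or_ne θ θ'
    · have hcont : Continuous fun q : (ℝ × E) × Angle × Angle =>
        |v (q.2.1, q.1.2) - v (q.2.2, y)| := by fun_prop
      exact (hcont.continuousAt.eventually_lt_const (by simpa using hε)).mono fun q hq _ => hq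
    · have hlt : (θ - θ').cos < 1 :=
        ((Angle.cos_toReal _).symm.trans_le (cos_le_one _)).lt_of_ne fun h => by
          rw [← Angle.cos_zero, Angle.cos_eq_iff_eq_or_eq_neg] at h
          exact hne (sub_eq_zero.1 (by simpa using h))
      exact (hcos.continuousAt.eventually_lt (by fun_prop) hlt).mono fun q hq hle =>
        absurd hle hq.not_ge
  have h := isCompact_univ.eventually_forall_of_forall_eventually (x₀ := ((1 : ℝ), y))
    (P := fun z (p : Angle × Angle) => z.1 ≤ (p.1 - p.2).cos → |v (p.1, z.2) - v (p.2, y)| < ε) hloc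
  rw [nhds_prod_eq] at h
  obtain ⟨κ, hκ, hlt⟩ := ((h.curry.filter_mono nhdsWithin_le_nhds).and
    (self_mem_nhdsWithin : Iio (1 : ℝ) ∈ 𝓝[<] 1)).exists
  exact ⟨κ, hlt, hκ.mono fun y' hy' θ θ' => hy' (θ, θ') (mem_univ _)⟩

section Competitors

variable {E : Type*} [TopologicalSpace E] [MeasureSpace E]
  {K : Angle → E → E → ℝ≥0∞} {v w : C(Angle × E, ℝ)} {c : Angle}

/-- `w` is obtained from `v` by a process that rearranges `v` on each circle without increasing the
energy or destroying any modulus of continuity, such as repeated polarization and limits. The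
parameter `κ` of `le_add` bounds the angular distance from above, by bounding its cosine from
below. -/
structure IsCompetitor (K : Angle → E → E → ℝ≥0∞) (v w : C(Angle × E, ℝ)) : Prop where
  kernelEnergy_le :
    kernelEnergy (angularKernel K) volume w ≤ kernelEnergy (angularKernel K) volume v
  map_eq : ∀ y, (volume.prod (Measure.dirac y)).map w = (volume.prod (Measure.dirac y)).map v
  le_add : ∀ y y' κ M, (∀ θ θ', κ ≤ (θ - θ').cos → v (θ, y) ≤ v (θ', y') + M) →
    ∀ θ θ', κ ≤ (θ - θ').cos → w (θ, y) ≤ w (θ', y') + M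

lemma IsCompetitor.refl (K : Angle → E → E → ℝ≥0∞) (v : C(Angle × E, ℝ)) : IsCompetitor K v v :=
  ⟨le_rfl, fun _ => rfl, fun _ _ _ _ h => h⟩

/-- Polarization towards the half circle at `c`, as an operation on continuous functions. -/
noncomputable def polarize (c : Angle) (w : C(Angle × E, ℝ)) : C(Angle × E, ℝ) where
  toFun := polarization (reflect c) (halfCircle c) w
  continuous_toFun := (isHalfSpace_halfCircle c).continuous_polarization (continuous_reflect c)
    (isClosed_halfCircle c) w.continuous

lemma IsCompetitor.abs_sub_le (h : IsCompetitor K v w) {y y' : E} {κ M : ℝ}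
    (hv : ∀ θ θ', κ ≤ (θ - θ').cos → |v (θ, y) - v (θ', y')| ≤ M) {θ θ' : Angle}
    (hθ : κ ≤ (θ - θ').cos) : |w (θ, y) - w (θ', y')| ≤ M := by
  have h₁ := h.le_add y y' κ M (fun φ φ' hφ => by linarith [(abs_le.1 (hv φ φ' hφ)).2]) θ θ' hθ
  have h₂ := h.le_add y' y κ M (fun φ φ' hφ => by
    rw [← Angle.cos_neg, neg_sub] at hφ
    linarith [(abs_le.1 (hv φ' φ hφ)).1]) θ' θ (by rwa [← Angle.cos_neg, neg_sub])
  exact abs_le.2 ⟨by linarith, by linarith⟩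

lemma equicontinuous_isCompetitor (K : Angle → E → E → ℝ≥0∞) (v : C(Angle × E, ℝ)) :
    Equicontinuous ((↑) : {w | IsCompetitor K v w} → Angle × E → ℝ) := by
  rintro ⟨θ, y⟩
  rw [Metric.equicontinuousAt_iff_right]
  intro ε hε
  obtain ⟨κ, hκ, hy⟩ := exists_forall_abs_sub_lt v y (half_pos hε)
  have hcos : ∀ᶠ x : Angle × E in 𝓝 (θ, y), κ < (x.1 - θ).cos := by
    have : Continuous fun x : Angle × E => (x.1 - θ).cos :=
      Angle.continuous_cos.comp (by fun_prop)
    exact this.continuousAt.eventually_const_lt (by simpa using hκ)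
  filter_upwards [hcos, continuous_snd.continuousAt.eventually hy] with x hx hxy w
  rw [dist_comm, Real.dist_eq]
  exact (w.2.abs_sub_le (fun θ θ' h => (hxy θ θ' h).le) hx.le).trans_lt (half_lt_self hε)

variable [BorelSpace E] [SecondCountableTopology E]

lemma IsCompetitor.volume_slice (h : IsCompetitor K v w) (y : E) {s : Set ℝ}
    (hs : MeasurableSet s) : volume {θ | w (θ, y) ∈ s} = volume {θ | v (θ, y) ∈ s} := by
  have hslice : ∀ f : C(Angle × E, ℝ),
      (volume.prod (Measure.dirac y)).map f s = volume {θ | f (θ, y) ∈ s} := fun f => by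
    rw [Measure.prod_dirac, Measure.map_map f.continuous.measurable (by fun_prop),
      Measure.map_apply (f.continuous.measurable.comp (by fun_prop)) hs]
    rfl
  rw [← hslice, ← hslice, h.map_eq]

lemma IsCompetitor.apply_mem_of_isClosed (h : IsCompetitor K v w) {y : E} {s : Set ℝ}
    (hs : IsClosed s) (hv : ∀ θ, v (θ, y) ∈ s) (θ : Angle) : w (θ, y) ∈ s := by
  have hopen : IsOpen {θ | w (θ, y) ∈ sᶜ} :=
    hs.isOpen_compl.preimage (by fun_prop : Continuous fun θ => w (θ, y))
  have hnull : volume {θ | w (θ, y) ∈ sᶜ} = 0 := by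
    rw [h.volume_slice y hs.measurableSet.compl]
    simp [hv]
  exact not_not.1 fun hθ => (hopen.eq_empty_of_measure_zero hnull).le hθ

lemma IsCompetitor.polarize [SFinite (volume : Measure E)] (hK : IsCosMonotone K)
    (h : IsCompetitor K v w) (c : Angle) : IsCompetitor K v (polarize c w) where
  kernelEnergy_le :=
    (hK.kernelEnergy_polarization_le w.continuous.measurable c).trans h.kernelEnergy_le
  map_eq y := by
    rw [← h.map_eq y]
    exact (isHalfSpace_halfCircle c).map_polarization (measurePreserving_reflect _ c)
      (measurableSet_halfCircle c) w.continuous.measurable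
  le_add y y' κ M hv θ θ' hθ := by
    refine (isHalfSpace_halfCircle c).polarization_le_add
      (R := fun x x' => x.2 = y ∧ x'.2 = y' ∧ κ ≤ (x.1 - x'.1).cos) ?_ ?_ ?_ ⟨rfl, rfl, hθ⟩
    · rintro x x' ⟨hx, hx', hcos⟩
      refine ⟨hx, hx', hcos.trans_eq ?_⟩
      rw [← Angle.cos_neg]
      congr 1
      simp only [reflect]
      abel
    · rintro x hx x' hx' ⟨hy, hy', hcos⟩
      have hsin := cos_sub_sub_cos_sub_reflect c x.1 x'.1
      refine ⟨hy, hy', hcos.trans ?_⟩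
      simp only [reflect]
      linarith [mul_nonneg (show 0 ≤ (x.1 - c).sin from hx) (show 0 ≤ (x'.1 - c).sin from hx')]
    · rintro ⟨x, _⟩ ⟨x', _⟩ ⟨rfl, rfl, hcos⟩
      exact h.le_add _ _ κ M hv x x' hcos

variable [LocallyCompactSpace E]

lemma isClosed_setOfPred_isCompetitor (hK : IsCosMonotone K)
    (v : C(Angle × E, ℝ)) : IsClosed {w | IsCompetitor K v w} := by
  have hset : {w | IsCompetitor K v w} =
      {w : C(Angle × E, ℝ) | kernelEnergy (angularKernel K) volume w ≤
        kernelEnergy (angularKernel K) volume v} ∩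
      {w | ∀ y, (volume.prod (Measure.dirac y)).map w = (volume.prod (Measure.dirac y)).map v} ∩
      {w | ∀ y y' κ M, (∀ θ θ', κ ≤ (θ - θ').cos → v (θ, y) ≤ v (θ', y') + M) →
        ∀ θ θ', κ ≤ (θ - θ').cos → w (θ, y) ≤ w (θ', y') + M} :=
    Set.ext fun w => ⟨fun h => ⟨⟨h.1, h.2⟩, h.3⟩, fun h => ⟨h.1.1, h.1.2, h.2⟩⟩
  rw [hset]
  refine ((isClosed_setOfPred_kernelEnergy_le hK.measurable_angularKernel _).inter ?_).inter ?_
  · simp only [ofPred_forall]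
    exact isClosed_iInter fun y => isClosed_setOfPred_map_eq v
  · simp only [ofPred_forall]
    exact isClosed_iInter fun y => isClosed_iInter fun y' => isClosed_iInter fun κ =>
      isClosed_iInter fun M => isClosed_iInter fun _ => isClosed_iInter fun θ =>
      isClosed_iInter fun θ' => isClosed_iInter fun _ => isClosed_le (by fun_prop) (by fun_prop)

lemma isCompact_setOfPred_isCompetitor (hK : IsCosMonotone K)
    (v : C(Angle × E, ℝ)) : IsCompact {w | IsCompetitor K v w} := by
  refine isCompact_of_isClosed_of_equicontinuous (isClosed_setOfPred_isCompetitor hK v)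
    (equicontinuous_isCompetitor K v) fun x => ⟨range fun θ => v (θ, x.2), ?_, ?_⟩
  · exact isCompact_range (by fun_prop)
  · exact fun w hw => hw.apply_mem_of_isClosed (isCompact_range (by fun_prop)).isClosed
      mem_range_self x.1

end Competitors

section Existence

variable {E : Type*} [TopologicalSpace E] [MeasureSpace E] [BorelSpace E]
  [SecondCountableTopology E] {w : C(Angle × E, ℝ)}

/-- `w` is nonincreasing in the distance of the first variable from `0`. -/
def IsCosAntitone {E : Type*} (w : Angle × E → ℝ) : Prop :=
  ∀ y θ φ, θ.cos < φ.cos → w (θ, y) ≤ w (φ, y)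

/-- The moment of `arctan ∘ w` against `cos` of the first variable. -/
noncomputable def cosMoment (ν : Measure E) (w : C(Angle × E, ℝ)) : ℝ :=
  ∫ x, arctan (w x) * x.1.cos ∂volume.prod ν

lemma norm_arctan_le (t : ℝ) : ‖arctan t‖ ≤ π / 2 :=
  abs_le.2 ⟨(neg_pi_div_two_lt_arctan t).le, (arctan_lt_pi_div_two t).le⟩

lemma norm_cos_le (θ : Angle) : ‖θ.cos‖ ≤ 1 := by
  rw [← Angle.cos_toReal]
  exact abs_cos_le_one _

lemma continuous_cosMoment [LocallyCompactSpace E] (ν : Measure E) [IsFiniteMeasure ν] :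
    Continuous (cosMoment ν) :=
  continuous_integral_comp_mul continuous_arctan (Angle.continuous_cos.comp continuous_fst)
    norm_arctan_le fun x => norm_cos_le x.1

lemma integrable_arctan_mul_cos (ν : Measure E) [IsFiniteMeasure ν] (w : C(Angle × E, ℝ)) :
    Integrable (fun x => arctan (w x) * x.1.cos) (volume.prod ν) := by
  refine .of_bound (C := π / 2 * 1) ?_ <| .of_forall fun x => ?_
  · exact ((continuous_arctan.comp w.continuous).mul
      (Angle.continuous_cos.comp continuous_fst)).aestronglyMeasurable
  · rw [norm_mul]
    exact mul_le_mul (norm_arctan_le _) (norm_cos_le _) (norm_nonneg _) (by positivity)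

lemma exists_reflect_eq {θ φ : Angle} (h : θ.cos < φ.cos) :
    ∃ c, c + c - φ = θ ∧ 0 < (0 - c).sin := by
  obtain ⟨c, hc⟩ := exists_add_self_eq (θ + φ)
  have hφ : c + c - φ = θ := by rw [hc, add_sub_cancel_right]
  have hne : (0 - c).sin ≠ 0 := fun h0 => by
    have := cos_sub_cos_reflect c (φ, ())
    simp only [reflect, hφ, h0] at this
    linarith
  rcases hne.lt_or_gt with h | h
  · exact ⟨c + π, by rw [add_add_add_comm, Angle.coe_pi_add_coe_pi, add_zero, hφ],
      by rwa [sin_sub_add_pi, neg_pos]⟩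
  · exact ⟨c, hφ, h⟩

lemma isCosAntitone_of_cosMoment_polarize_le (ν : Measure E) [IsFiniteMeasure ν]
    [ν.IsOpenPosMeasure] (h : ∀ c, cosMoment ν (polarize c w) ≤ cosMoment ν w) :
    IsCosAntitone w := by
  intro y θ φ hlt
  obtain ⟨c, rfl, h0⟩ := exists_reflect_eq hlt
  have hpol : ∀ x, arctan (polarize c w x) =
      polarization (reflect c) (halfCircle c) (fun x => arctan (w x)) x :=
    fun x => (congrFun (polarization_comp_of_monotone arctan_strictMono.monotone) x).symm
  have hae := (isHalfSpace_halfCircle c).ae_apply_le_of_integral_polarization_mul_le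
    (w := fun x => arctan (w x)) (g := fun x => x.1.cos) (measurePreserving_reflect ν c)
    (fun x hx => cos_reflect_le h0.le hx) (integrable_arctan_mul_cos ν w) ?_ ?_
  · have hr := continuous_reflect (E := E) c
    have hg : Continuous fun x : Angle × E => x.1.cos := Angle.continuous_cos.comp continuous_fst
    exact arctan_strictMono.le_iff_le.1 <| forall_mem_of_ae_of_isOpen_not
      (isOpen_lt (hg.comp hr) hg)
      (by simpa only [not_le] using isOpen_lt (by fun_prop) (by fun_prop)) hae (φ, y) hlt
  · simpa only [hpol] using integrable_arctan_mul_cos ν (polarize c w)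
  · simpa only [cosMoment, hpol] using h c

theorem exists_isCompetitor_isCosAntitone [LocallyCompactSpace E] [SFinite (volume : Measure E)]
    [(volume : Measure E).IsOpenPosMeasure] {K : Angle → E → E → ℝ≥0∞} (hK : IsCosMonotone K)
    (v : C(Angle × E, ℝ)) : ∃ w, IsCompetitor K v w ∧ IsCosAntitone w := by
  have := (absolutelyContinuous_toFinite (volume : Measure E)).isOpenPosMeasure
  obtain ⟨w, hw, hmax⟩ := (isCompact_setOfPred_isCompetitor hK v).exists_isMaxOn
    ⟨v, IsCompetitor.refl K v⟩ (continuous_cosMoment (volume : Measure E).toFinite).continuousOn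
  exact ⟨w, hw, isCosAntitone_of_cosMoment_polarize_le _ fun c => hmax (hw.polarize hK c)⟩

end Existence

section Circle

variable {θ φ : Angle} {S : Set Angle}

lemma abs_toReal_lt_abs_toReal_iff : |φ.toReal| < |θ.toReal| ↔ θ.cos < φ.cos := by
  rw [← Angle.cos_toReal, ← Angle.cos_toReal, ← cos_abs, ← cos_abs φ.toReal]
  exact (strictAntiOn_cos.lt_iff_gt ⟨abs_nonneg _, θ.abs_toReal_le_pi⟩
    ⟨abs_nonneg _, φ.abs_toReal_le_pi⟩).symm

lemma measurable_toReal : Measurable Angle.toReal :=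
  measurable_subtype_coe.comp (AddCircle.measurableEquivIoc (2 * π) (-π)).measurable

lemma volume_lt_top (S : Set Angle) : volume S < ⊤ :=
  (measure_mono (subset_univ S)).trans_lt isCompact_univ.measure_lt_top

lemma volume_toReal_div_two_le_pi (S : Set Angle) : (volume S).toReal / 2 ≤ π := by
  have h : volume S ≤ ENNReal.ofReal (2 * π) :=
    (measure_mono (subset_univ S)).trans_eq (AddCircle.measure_univ (2 * π))
  linarith [ENNReal.toReal_le_of_le_ofReal two_pi_pos.le h]

lemma volume_abs_toReal_lt {r : ℝ} (hr : r ≤ π) :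
    volume {θ : Angle | |θ.toReal| < r} = ENNReal.ofReal (2 * r) := by
  have hpre : ((↑) : ℝ → Angle) ⁻¹' {θ | |θ.toReal| < r} ∩ Ioc (-π) (-π + 2 * π) = Ioo (-r) r := by
    ext t
    rw [show -π + 2 * π = π by ring]
    refine ⟨fun ⟨ht, hmem⟩ => ?_, fun ht => ?_⟩
    · rwa [mem_preimage, mem_ofPred_eq, Angle.toReal_coe_eq_self_iff_mem_Ioc.2 hmem, abs_lt] at ht
    · have hmem : t ∈ Ioc (-π) π := ⟨by linarith [ht.1], ht.2.le.trans hr⟩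
      rw [← Angle.toReal_coe_eq_self_iff_mem_Ioc] at hmem
      exact ⟨by rwa [mem_preimage, mem_ofPred_eq, hmem, abs_lt],
        Angle.toReal_coe_eq_self_iff_mem_Ioc.1 hmem⟩
  refine (AddCircle.add_projection_respects_measure (2 * π) (-π)
    (measurableSet_lt measurable_toReal.norm measurable_const)).trans ?_
  refine (congrArg volume hpre).trans ?_
  rw [Real.volume_Ioo, sub_neg_eq_add, two_mul]

lemma ae_eq_of_ae_cos_lt (hS : MeasurableSet S)
    (h : ∀ᵐ θ : Angle, ∀ᵐ φ : Angle, φ.cos < θ.cos → φ ∈ S → θ ∈ S) :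
    S =ᵐ[volume] {θ | |θ.toReal| < (volume S).toReal / 2} := by
  set B : Set Angle := {θ | |θ.toReal| < (volume S).toReal / 2}
  have hB : MeasurableSet B := measurableSet_lt measurable_toReal.norm measurable_const
  have hvol : volume S = volume B := by
    rw [volume_abs_toReal_lt (volume_toReal_div_two_le_pi S), mul_div_cancel₀ _ two_ne_zero,
      ENNReal.ofReal_toReal (volume_lt_top S).ne]
  have hdiff : volume (S \ B) = volume (B \ S) := by
    rw [← ENNReal.add_right_inj (volume_lt_top (S ∩ B)).ne, measure_inter_add_sdiff S hB,
      inter_comm, measure_inter_add_sdiff B hS, hvol]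
  have hnull : volume (B \ S) = 0 := by
    by_contra hpos
    obtain ⟨θ, ⟨hθB, hθS⟩, hae⟩ := ((frequently_ae_mem_iff.2 hpos).and_eventually h).exists
    refine hpos (hdiff.symm.trans (measure_eq_zero_iff_ae_notMem.2 ?_))
    filter_upwards [hae] with φ hcon hφ
    have hlt : |θ.toReal| < |φ.toReal| := hθB.trans_le (not_lt.1 hφ.2)
    exact hθS (hcon (abs_toReal_lt_abs_toReal_iff.1 hlt) hφ.1)
  exact ae_eq_set.2 ⟨hdiff.trans hnull, hnull⟩

end Circle

section Steiner

variable {E : Type*} {A B : Set (Angle × E)}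

/-- The rearrangement of a set on each circle: the slices of `steinerSet A` are the open arcs
centred at `0` that have the length of the corresponding slices of `A`. -/
noncomputable def steinerSet (A : Set (Angle × E)) : Set (Angle × E) :=
  {x | |x.1.toReal| < (volume {θ | (θ, x.2) ∈ A}).toReal / 2}

lemma steinerSet_congr (h : ∀ y, volume {θ | (θ, y) ∈ A} = volume {θ | (θ, y) ∈ B}) :
    steinerSet A = steinerSet B := by
  simp only [steinerSet, h]

variable [MeasurableSpace E]

lemma measurableSet_steinerSet (hA : MeasurableSet A) : MeasurableSet (steinerSet A) :=
  measurableSet_lt (measurable_toReal.norm.comp measurable_fst)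
    (((measurable_measure_prodMk_right hA).ennreal_toReal.div_const 2).comp measurable_snd)

lemma ae_eq_steinerSet {ν : Measure E} [SFinite ν] (hA : MeasurableSet A)
    (h : ∀ᵐ x ∂(volume : Measure Angle).prod ν, ∀ᵐ φ : Angle,
      φ.cos < x.1.cos → (φ, x.2) ∈ A → x ∈ A) :
    A =ᵐ[(volume : Measure Angle).prod ν] steinerSet A := by
  have hm : MeasurableSet {x | x ∈ A ↔ x ∈ steinerSet A} := hA.iff (measurableSet_steinerSet hA)
  have hswap : ∀ᵐ p ∂ν.prod (volume : Measure Angle), p.swap ∈ A ↔ p.swap ∈ steinerSet A := by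
    refine (Measure.ae_prod_iff_ae_ae (measurable_swap hm)).2 ?_
    filter_upwards [Measure.ae_ae_of_ae_prod
      (Measure.measurePreserving_swap.quasiMeasurePreserving.ae h)] with y hy
    exact (ae_eq_of_ae_cos_lt (hA.preimage measurable_prodMk_right) hy).mem_iff
  exact eventuallyEq_set.2
    (Measure.measurePreserving_swap.quasiMeasurePreserving.ae hswap)

/-- The rearrangement of a nonnegative function on each circle, by means of its superlevel sets. -/
noncomputable def steinerRearrangement (w : Angle × E → ℝ) (x : Angle × E) : ℝ :=
  ∫ t in Ioi (0 : ℝ), (steinerSet {z | t < w z}).indicator (fun _ => 1) x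

variable {w : Angle × E → ℝ}

lemma IsCosAntitone.superlevel_ae_eq_steinerSet {ν : Measure E} [SFinite ν] (hw : IsCosAntitone w)
    (hm : Measurable w) (τ : ℝ) :
    {x | τ < w x} =ᵐ[(volume : Measure Angle).prod ν] steinerSet {x | τ < w x} :=
  ae_eq_steinerSet (measurableSet_lt measurable_const hm) <| ae_of_all _ fun x => ae_of_all _
    fun φ hcos (hφ : τ < w (φ, x.2)) => hφ.trans_le (hw x.2 _ _ hcos)

lemma integral_indicator_lt {a : ℝ} (ha : 0 ≤ a) :
    ∫ t in Ioi (0 : ℝ), (Iio a).indicator (fun _ => (1 : ℝ)) t = a := by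
  rw [setIntegral_indicator measurableSet_Iio, Ioi_inter_Iio]
  simp [ha]

lemma IsCosAntitone.steinerRearrangement_ae_eq {ν : Measure E} [SFinite ν] (hw : IsCosAntitone w)
    (hm : Measurable w) (h0 : ∀ x, 0 ≤ w x) :
    steinerRearrangement w =ᵐ[(volume : Measure Angle).prod ν] w := by
  have hlevel : IsCosAntitone fun x : Angle × (E × ℝ) => w (x.1, x.2.1) - x.2.2 :=
    fun y θ φ h => sub_le_sub_right (hw y.1 θ φ h) _
  have hae := (hlevel.superlevel_ae_eq_steinerSet (ν := ν.prod (volume : Measure ℝ))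
    (by fun_prop) 0).mem_iff
  have hprod := Measure.ae_ae_of_ae_prod <|
    (measurePreserving_prodAssoc volume ν volume).quasiMeasurePreserving.ae hae
  filter_upwards [hprod] with x hx
  rw [steinerRearrangement, ← integral_indicator_lt (h0 x)]
  refine integral_congr_ae (ae_restrict_of_ae ?_)
  filter_upwards [hx] with t ht
  simp only [sub_pos] at ht
  exact indicator_eq_indicator ht.symm rfl

end Steiner

section Translation

variable {E : Type*} {A : Set (Angle × E)}

/-- For every reflection, polarization either fixes `A` or reflects it. -/
def IsReflectionOrdered (A : Set (Angle × E)) : Prop :=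
  ∀ c, (∀ x ∈ halfCircle c, reflect c x ∈ A → x ∈ A) ∨ ∀ x ∈ halfCircle c, x ∈ A → reflect c x ∈ A

lemma IsReflectionOrdered.translate (hA : IsReflectionOrdered A) (a : Angle) :
    IsReflectionOrdered {x : Angle × E | (x.1 + a, x.2) ∈ A} := by
  intro c
  have hmem : ∀ x ∈ (halfCircle c : Set (Angle × E)), (x.1 + a, x.2) ∈ halfCircle (c + a) :=
    fun x hx => by simpa only [halfCircle, mem_ofPred_eq, add_sub_add_right_eq_sub] using hx
  have hreflect : ∀ x : Angle × E,
      reflect (c + a) (x.1 + a, x.2) = ((reflect c x).1 + a, (reflect c x).2) :=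
    fun x => Prod.ext (by simp only [reflect]; abel) rfl
  refine (hA (c + a)).imp (fun h x hx hxA => ?_) fun h x hx hxA => ?_
  · exact h _ (hmem x hx) (by rwa [hreflect])
  · have hxA' := h _ (hmem x hx) hxA
    rwa [hreflect] at hxA'

variable [MeasurableSpace E]

lemma ae_ae_of_forall_ae_sub {ν : Measure E} [SFinite ν] {P : Angle → Angle → E → Prop}
    (hP : MeasurableSet {q : (Angle × Angle) × E | P q.1.1 q.1.2 q.2})
    (h : ∀ c, ∀ᵐ x ∂(volume : Measure Angle).prod ν, P (c - x.1) x.1 x.2) :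
    ∀ᵐ x ∂(volume : Measure Angle).prod ν, ∀ᵐ φ, P φ x.1 x.2 := by
  have hm : Measurable fun q : Angle × Angle × E => ((q.1 - q.2.1, q.2.1), q.2.2) := by fun_prop
  filter_upwards [(Measure.ae_ae_comm (p := fun c (x : Angle × E) => P (c - x.1) x.1 x.2) (hm hP)).1
    (ae_of_all volume h)] with x hx
  simpa using (measurePreserving_add_right volume x.1).quasiMeasurePreserving.ae hx

/-- The component in direction `b` of the first moment of `A`. -/
noncomputable def angularMoment (ν : Measure E) (A : Set (Angle × E)) (b : Angle) : ℝ :=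
  ∫ x, A.indicator 1 x * (x.1 - b).cos ∂volume.prod ν

variable {ν : Measure E}

lemma measurable_indicator_mul_cos (hA : MeasurableSet A) (b : Angle) :
    Measurable fun x => A.indicator (1 : Angle × E → ℝ) x * (x.1 - b).cos :=
  (measurable_one.indicator hA).mul (Angle.continuous_cos.measurable.comp (by fun_prop))

lemma norm_indicator_mul_cos_le {E : Type*} (A : Set (Angle × E)) (b : Angle) (x : Angle × E) :
    ‖A.indicator (1 : Angle × E → ℝ) x * (x.1 - b).cos‖ ≤ 1 := by
  by_cases hx : x ∈ A <;> simp [hx, norm_cos_le, -norm_eq_abs]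

lemma continuous_angularMoment [IsFiniteMeasure ν] (hA : MeasurableSet A) :
    Continuous (angularMoment ν A) := by
  refine continuous_of_dominated (bound := fun _ => 1)
    (fun b => (measurable_indicator_mul_cos hA b).aestronglyMeasurable)
    (fun b => ae_of_all _ (norm_indicator_mul_cos_le A b)) (integrable_const _)
    (ae_of_all _ fun x => continuous_const.mul ?_)
  exact Angle.continuous_cos.comp (continuous_const.sub continuous_id)

lemma integrable_indicator_mul_cos [IsFiniteMeasure ν] (hA : MeasurableSet A) (b : Angle) :
    Integrable (fun x => A.indicator 1 x * (x.1 - b).cos) (volume.prod ν) :=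
  .of_bound (measurable_indicator_mul_cos hA b).aestronglyMeasurable 1
    (ae_of_all _ (norm_indicator_mul_cos_le A b))

lemma angularMoment_preimage {e : Angle × E → Angle × E}
    (he : MeasurePreserving e ((volume : Measure Angle).prod ν) (volume.prod ν))
    (hA : MeasurableSet A) {b b' : Angle} (h : ∀ x, (x.1 - b).cos = ((e x).1 - b').cos) :
    angularMoment ν (e ⁻¹' A) b = angularMoment ν A b' := by
  rw [angularMoment, angularMoment]
  conv_rhs => rw [← he.map_eq]
  rw [integral_map he.aemeasurable (measurable_indicator_mul_cos hA b').aestronglyMeasurable]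
  simp only [h]
  rfl

lemma IsReflectionOrdered.ae_mem_of_angularMoment_le [IsFiniteMeasure ν]
    (hord : IsReflectionOrdered A) (hA : MeasurableSet A)
    (hmax : ∀ b, angularMoment ν A b ≤ angularMoment ν A 0) (c : Angle) :
    ∀ᵐ x ∂(volume : Measure Angle).prod ν,
      (reflect c x).1.cos < x.1.cos → reflect c x ∈ A → x ∈ A := by
  wlog hc : 0 ≤ (0 - c).sin generalizing c
  · rw [← reflect_add_pi]
    exact this (c + π) (by rw [sin_sub_add_pi]; linarith)
  have hH := isHalfSpace_halfCircle (E := E) c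
  rcases hord c with h | h
  · refine ae_of_all _ fun x hcos => h x <| (hH.mem_or_mem x).resolve_right fun hx => ?_
    exact hcos.not_ge (by simpa only [hH.involutive x] using cos_reflect_le hc hx)
  have hσ := measurePreserving_reflect ν c
  have hpol : polarization (reflect c) (halfCircle c) (A.indicator 1) =
      (reflect c ⁻¹' A).indicator (1 : Angle × E → ℝ) :=
    hH.polarization_eq_comp fun x hx => by
      by_cases hxA : x ∈ A
      · simp [hxA, h x hx hxA]
      · rw [indicator_of_notMem hxA]
        exact indicator_nonneg (fun _ _ => zero_le_one) _
  have hmoment : angularMoment ν (reflect c ⁻¹' A) 0 = angularMoment ν A (c + c) :=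
    angularMoment_preimage hσ hA fun x => by
      rw [reflect, sub_zero, sub_sub_cancel_left, Angle.cos_neg]
  have hae := hH.ae_apply_le_of_integral_polarization_mul_le (w := A.indicator 1)
    (g := fun x => x.1.cos) hσ (fun x hx => cos_reflect_le hc hx)
    (by simpa only [sub_zero] using integrable_indicator_mul_cos hA 0)
    (by simpa only [hpol, sub_zero] using integrable_indicator_mul_cos (hσ.measurable hA) 0)
    (by simpa only [hpol, angularMoment, sub_zero] using hmoment.trans_le (hmax (c + c)))
  filter_upwards [hae] with x hx hcos hxA
  by_contra hxn
  have := hx hcos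
  rw [indicator_of_mem hxA, indicator_of_notMem hxn] at this
  exact this.not_gt zero_lt_one

lemma IsReflectionOrdered.ae_eq_steinerSet [IsFiniteMeasure ν]
    (hord : IsReflectionOrdered A) (hA : MeasurableSet A)
    (hmax : ∀ b, angularMoment ν A b ≤ angularMoment ν A 0) :
    A =ᵐ[(volume : Measure Angle).prod ν] steinerSet A := by
  refine PeriodicRearrangement.ae_eq_steinerSet hA <| ae_ae_of_forall_ae_sub
    (P := fun φ θ y => φ.cos < θ.cos → (φ, y) ∈ A → (θ, y) ∈ A) ?_ fun c => ?_
  · have hcos := Angle.continuous_cos.measurable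
    exact (measurableSet_lt (hcos.comp (by fun_prop)) (hcos.comp (by fun_prop))).imp <|
      (hA.preimage (by fun_prop : Measurable fun q : (Angle × Angle) × E => (q.1.1, q.2))).imp
        (hA.preimage (by fun_prop : Measurable fun q : (Angle × Angle) × E => (q.1.2, q.2)))
  · obtain ⟨c, rfl⟩ := exists_add_self_eq c
    exact hord.ae_mem_of_angularMoment_le hA hmax c

lemma IsReflectionOrdered.exists_ae_eq_translate {ν : Measure E} [SFinite ν]
    (hord : IsReflectionOrdered A) (hA : MeasurableSet A) :
    ∃ a, A =ᵐ[(volume : Measure Angle).prod ν] {x | (x.1 - a, x.2) ∈ steinerSet A} := by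
  obtain ⟨a, -, ha⟩ := isCompact_univ.exists_isMaxOn univ_nonempty
    (continuous_angularMoment (ν := ν.toFinite) hA).continuousOn
  have hshift : MeasurePreserving (fun x : Angle × E => (x.1 + a, x.2))
      ((volume : Measure Angle).prod ν.toFinite) (volume.prod ν.toFinite) := by
    simpa using measurePreserving_sub_fst ν.toFinite (-a)
  have hmoment : ∀ b, angularMoment ν.toFinite ((fun x => (x.1 + a, x.2)) ⁻¹' A) b =
      angularMoment ν.toFinite A (b + a) := fun b =>
    angularMoment_preimage hshift hA fun x => by rw [add_sub_add_right_eq_sub]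
  have hae := (hord.translate a).ae_eq_steinerSet (ν := ν.toFinite) (hshift.measurable hA)
    fun b => by
      have hle : angularMoment ν.toFinite A (b + a) ≤ angularMoment ν.toFinite A (0 + a) := by
        rw [zero_add]
        exact ha (mem_univ (b + a))
      exact (hmoment b).trans_le (hle.trans_eq (hmoment 0).symm)
  have hsteiner : steinerSet {x : Angle × E | (x.1 + a, x.2) ∈ A} = steinerSet A :=
    steinerSet_congr fun y => measure_preimage_add_right volume a {θ | (θ, y) ∈ A}
  rw [hsteiner] at hae
  refine ⟨a, (Measure.AbsolutelyContinuous.rfl.prod (absolutelyContinuous_toFinite ν)).ae_eq ?_⟩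
  have hshift' := (measurePreserving_sub_fst ν.toFinite a).quasiMeasurePreserving.preimage_ae_eq hae
  have hpre : (fun x : Angle × E => (x.1 - a, x.2)) ⁻¹' {x | (x.1 + a, x.2) ∈ A} = A := by
    ext x
    simp only [mem_preimage, mem_ofPred_eq, sub_add_cancel]
  rwa [hpre] at hshift'

end Translation

section Energy

variable {E : Type*} [TopologicalSpace E] [MeasureSpace E] [BorelSpace E]
  [SecondCountableTopology E] {K : Angle → E → E → ℝ≥0∞} {u v w : C(Angle × E, ℝ)}

lemma IsCompetitor.steinerSet_superlevel (h : IsCompetitor K v w) (τ : ℝ) :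
    steinerSet {x | τ < w x} = steinerSet {x | τ < v x} :=
  steinerSet_congr fun y => h.volume_slice y (measurableSet_Ioi (a := τ))

lemma IsCompetitor.steinerRearrangement_eq (h : IsCompetitor K v w) :
    steinerRearrangement w = steinerRearrangement v := by
  unfold steinerRearrangement
  simp only [h.steinerSet_superlevel]

variable [SFinite (volume : Measure E)]

variable [LocallyCompactSpace E] [(volume : Measure E).IsOpenPosMeasure]

lemma exists_isCompetitor_steinerRearrangement_ae_eq (hK : IsCosMonotone K) (h0 : ∀ x, 0 ≤ v x) :
    ∃ w, IsCompetitor K v w ∧ IsCosAntitone w ∧ steinerRearrangement v =ᵐ[volume] w := by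
  obtain ⟨w, hcomp, hanti⟩ := exists_isCompetitor_isCosAntitone hK v
  refine ⟨w, hcomp, hanti, ?_⟩
  rw [← hcomp.steinerRearrangement_eq]
  exact hanti.steinerRearrangement_ae_eq w.continuous.measurable fun x =>
    hcomp.apply_mem_of_isClosed isClosed_Ici (fun θ => h0 (θ, x.2)) x.1

theorem IsCosMonotone.kernelEnergy_steinerRearrangement_le (hK : IsCosMonotone K)
    (h0 : ∀ x, 0 ≤ v x) : kernelEnergy (angularKernel K) volume (steinerRearrangement v) ≤
      kernelEnergy (angularKernel K) volume v := by
  obtain ⟨w, hcomp, -, hae⟩ := exists_isCompetitor_steinerRearrangement_ae_eq hK h0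
  exact (kernelEnergy_congr_ae hae).trans_le hcomp.kernelEnergy_le

lemma IsCosMonotone.kernelEnergy_steinerRearrangement_eq_lintegral (hK : IsCosMonotone K)
    (h0 : ∀ x, 0 ≤ v x) : kernelEnergy (angularKernel K) volume (steinerRearrangement v) =
      ∫⁻ τ : ℝ, kernelEnergy (angularKernel K) volume ((steinerSet {x | τ < v x}).indicator 1) := by
  obtain ⟨w, hcomp, hanti, hae⟩ := exists_isCompetitor_steinerRearrangement_ae_eq hK h0
  rw [kernelEnergy_congr_ae hae, kernelEnergy_eq_lintegral_superlevel hK.measurable_angularKernel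
    w.continuous.measurable]
  refine lintegral_congr fun τ => kernelEnergy_congr_ae (indicator_ae_eq_of_ae_eq_set ?_)
  rw [← hcomp.steinerSet_superlevel]
  exact hanti.superlevel_ae_eq_steinerSet w.continuous.measurable τ

/-- The rearrangement does not see a polarization, so equality makes every polarization an
equality case. -/
lemma IsCosMonotone.isReflectionOrdered_superlevel (hK : IsCosMonotone K) (h0 : ∀ x, 0 ≤ v x)
    (hfin : kernelEnergy (angularKernel K) volume v ≠ ⊤)
    (h : kernelEnergy (angularKernel K) volume v ≤
      kernelEnergy (angularKernel K) volume (steinerRearrangement v)) (τ : ℝ) :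
    IsReflectionOrdered {x | τ < v x} := by
  intro c
  have hcomp : IsCompetitor K v (polarize c v) := (IsCompetitor.refl K v).polarize hK c
  have hle : kernelEnergy (angularKernel K) volume v ≤
      kernelEnergy (angularKernel K) volume (polarize c v) := by
    rw [← hcomp.steinerRearrangement_eq] at h
    exact h.trans (hK.kernelEnergy_steinerRearrangement_le fun x =>
      hcomp.apply_mem_of_isClosed isClosed_Ici (fun θ => h0 (θ, x.2)) x.1)
  exact hK.superlevel_polarized_or v.continuous hfin c hle τ

lemma IsCosMonotone.kernelEnergy_steinerRearrangement_eq_of_ae (hK : IsCosMonotone K)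
    (h0 : ∀ x, 0 ≤ v x)
    (h : ∀ᵐ τ : ℝ, ∃ a, {x | τ < v x} =ᵐ[volume] {x | (x.1 - a, x.2) ∈ steinerSet {x | τ < v x}}) :
    kernelEnergy (angularKernel K) volume (steinerRearrangement v) =
      kernelEnergy (angularKernel K) volume v := by
  rw [hK.kernelEnergy_steinerRearrangement_eq_lintegral h0,
    kernelEnergy_eq_lintegral_superlevel hK.measurable_angularKernel v.continuous.measurable]
  refine lintegral_congr_ae ?_
  filter_upwards [h] with τ ⟨a, ha⟩
  have hm : Measurable ((steinerSet {x | τ < v x}).indicator (1 : Angle × E → ℝ)) :=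
    measurable_one.indicator
      (measurableSet_steinerSet (measurableSet_lt measurable_const v.continuous.measurable))
  rw [← hK.kernelEnergy_comp_sub_fst hm a]
  exact kernelEnergy_congr_ae (indicator_ae_eq_of_ae_eq_set ha).symm

theorem IsCosMonotone.kernelEnergy_steinerRearrangement_abs_eq_iff (hK : IsCosMonotone K)
    (u : C(Angle × E, ℝ)) (hfin : kernelEnergy (angularKernel K) volume u ≠ ⊤) :
    kernelEnergy (angularKernel K) volume (steinerRearrangement fun x => |u x|) =
        kernelEnergy (angularKernel K) volume u ↔
      ((∀ x, u x = |u x|) ∨ ∀ x, u x = -|u x|) ∧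
        ∀ᵐ τ : ℝ, ∃ a, {x | τ < |u x|} =ᵐ[volume]
          {x | (x.1 - a, x.2) ∈ steinerSet {x | τ < |u x|}} := by
  set v : C(Angle × E, ℝ) := |u|
  have h0 : ∀ x, 0 ≤ v x := fun x => abs_nonneg (u x)
  have habs : kernelEnergy (angularKernel K) volume v ≤ kernelEnergy (angularKernel K) volume u :=
    kernelEnergy_abs_le
  have hsteiner := hK.kernelEnergy_steinerRearrangement_le h0
  constructor
  · intro h
    have hord := hK.isReflectionOrdered_superlevel h0 (habs.trans_lt hfin.lt_top).ne
      (habs.trans_eq h.symm)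
    exact ⟨hK.eq_abs_or_eq_neg_abs u.continuous hfin (habs.antisymm (h.symm.trans_le hsteiner)),
      ae_of_all _ fun τ => (hord τ).exists_ae_eq_translate
        (measurableSet_lt measurable_const v.continuous.measurable)⟩
  · rintro ⟨hsign, hae⟩
    refine (hK.kernelEnergy_steinerRearrangement_eq_of_ae h0 hae).trans (habs.antisymm ?_)
    refine kernelEnergy_mono fun x y => ?_
    rcases hsign with h | h
    · rw [h x, h y]; rfl
    · rw [h x, h y, neg_sub_neg, abs_sub_comm]; rfl

end Energy

section SteinerRearrangement

variable {E : Type*} {A : Set (Angle × E)} {w : Angle × E → ℝ}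

lemma steinerSet_empty : steinerSet (∅ : Set (Angle × E)) = ∅ := by
  simp only [steinerSet, mem_empty_iff_false, ofPred_false, measure_empty, ENNReal.toReal_zero,
    zero_div, (abs_nonneg _).not_gt]

lemma steinerRearrangement_indicator (A : Set (Angle × E)) :
    steinerRearrangement (A.indicator fun _ => 1) = (steinerSet A).indicator fun _ => 1 := by
  funext x
  have hlevel {t : ℝ} (ht : 0 < t) :
      {z | t < A.indicator (fun _ => (1 : ℝ)) z} = if t < 1 then A else ∅ := by
    ext z
    by_cases hz : z ∈ A <;> split_ifs with h <;> simp [hz, h, ht.le]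
  have h0 : 0 ≤ (steinerSet A).indicator (fun _ => (1 : ℝ)) x :=
    indicator_nonneg (fun _ _ => zero_le_one) x
  rw [steinerRearrangement, ← integral_indicator_lt h0]
  refine setIntegral_congr_fun measurableSet_Ioi fun t (ht : 0 < t) => ?_
  by_cases hx : x ∈ steinerSet A <;> by_cases h1 : t < 1 <;>
    simp [hlevel ht, hx, h1, steinerSet_empty, ht.le]

lemma measurable_steinerRearrangement [MeasurableSpace E] (hw : Measurable w) :
    Measurable (steinerRearrangement w) := by
  have hlevel : MeasurableSet {p : Angle × (E × ℝ) | p.2.2 < w (p.1, p.2.1)} :=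
    measurableSet_lt (by fun_prop) (by fun_prop)
  have hjoint : Measurable fun q : (Angle × E) × ℝ =>
      (steinerSet {p : Angle × (E × ℝ) | p.2.2 < w (p.1, p.2.1)}).indicator (fun _ => (1 : ℝ))
        (q.1.1, q.1.2, q.2) :=
    (measurable_const.indicator (measurableSet_steinerSet hlevel)).comp (by fun_prop)
  exact (hjoint.stronglyMeasurable.integral_prod_right (ν := volume.restrict (Ioi 0))).measurable

end SteinerRearrangement

section AngleProj

variable {E : Type*}

/-- The covering of the cylinder `Angle × E` by `ℝ × E`, which identifies the functions that are
`2π`-periodic in the first variable with the functions on the cylinder. -/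
noncomputable def angleProj (x : ℝ × E) : Angle × E := (↑x.1, x.2)

lemma angleProj_surjective : Function.Surjective (angleProj : ℝ × E → Angle × E) :=
  fun z => ⟨(z.1.toReal, z.2), Prod.ext (Angle.coe_toReal z.1) rfl⟩

lemma angleProj_add_two_pi_mul (t : ℝ) (n : ℤ) (y : E) :
    angleProj (t + 2 * π * n, y) = angleProj (t, y) :=
  Prod.ext (Angle.angle_eq_iff_two_pi_dvd_sub.2 ⟨n, by simp⟩) rfl

lemma measurable_angleProj [MeasurableSpace E] :
    Measurable (angleProj : ℝ × E → Angle × E) :=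
  (AddCircle.measurable_mk'.comp measurable_fst).prodMk measurable_snd

lemma exists_continuousMap_comp_angleProj [TopologicalSpace E] {u : ℝ × E → ℝ} (hu : Continuous u)
    (hper : ∀ x : ℝ × E, u (x.1 + 2 * π, x.2) = u x) :
    ∃ v : C(Angle × E, ℝ), u = fun x => v (angleProj x) := by
  have hmk : IsOpenQuotientMap (angleProj : ℝ × E → Angle × E) :=
    QuotientAddGroup.isOpenQuotientMap_mk.prodMap IsOpenQuotientMap.id
  have hv (x : ℝ × E) : u ((x.1 : Angle).toReal, x.2) = u x := by
    have hfun : Function.Periodic (fun t => u (t, x.2)) (2 * π) := fun t => hper (t, x.2)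
    exact (hfun.lift_coe _).symm.trans <|
      (congrArg hfun.lift (Angle.coe_toReal x.1)).trans (hfun.lift_coe x.1)
  refine ⟨⟨fun z => u (z.1.toReal, z.2), hmk.continuous_comp_iff.1 ?_⟩, funext fun x => (hv x).symm⟩
  exact hu.congr fun x => (hv x).symm

lemma lintegral_eq_lintegral_tsum_toReal {h : ℝ → ℝ≥0∞} (hh : Measurable h) :
    ∫⁻ t, h t = ∫⁻ θ : Angle, ∑' n : ℤ, h (θ.toReal + 2 * π * n) := by
  have hcover := iUnion_Ioc_add_zsmul two_pi_pos (-π)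
  have hdisj := pairwise_disjoint_Ioc_add_zsmul (-π) (2 * π)
  rw [lintegral_tsum fun n => by have := measurable_toReal; fun_prop,
    ← setLIntegral_univ, ← hcover, lintegral_iUnion (fun n => measurableSet_Ioc) hdisj]
  refine tsum_congr fun n => ?_
  have hpre : (· + 2 * π * n) ⁻¹' Ioc (-π + n • (2 * π)) (-π + (n + 1) • (2 * π)) =
      Ioc (-π) (-π + 2 * π) := by
    rw [preimage_add_const_Ioc]
    congr 1 <;> simp only [zsmul_eq_mul] <;> push_cast <;> ring
  calc ∫⁻ t in Ioc (-π + n • (2 * π)) (-π + (n + 1) • (2 * π)), h t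
      = ∫⁻ t in Ioc (-π) (-π + 2 * π), h (t + 2 * π * n) := by
        rw [← hpre, (measurePreserving_add_right volume (2 * π * n)).setLIntegral_comp_preimage
          measurableSet_Ioc hh]
    _ = ∫⁻ t in Ioc (-π) (-π + 2 * π), h ((t : Angle).toReal + 2 * π * n) := by
        refine setLIntegral_congr_fun measurableSet_Ioc fun t ht => ?_
        rw [Angle.toReal_coe_eq_self_iff_mem_Ioc.2 (by convert ht using 2; ring)]
    _ = ∫⁻ θ : Angle, h (θ.toReal + 2 * π * n) :=
        AddCircle.lintegral_preimage (2 * π) (-π) fun θ => h (Angle.toReal θ + 2 * π * n)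

variable [MeasureSpace E] [SFinite (volume : Measure E)]

lemma measurePreserving_angleProj :
    MeasurePreserving angleProj (volume.restrict {x : ℝ × E | x.1 ∈ Ioo (-π) π}) volume := by
  have hstrip : {x : ℝ × E | x.1 ∈ Ioo (-π) π} = Ioo (-π) π ×ˢ univ := by ext; simp
  have hmk := AddCircle.measurePreserving_mk (2 * π) (-π)
  rw [show -π + 2 * π = π by ring, ← restrict_Ioo_eq_restrict_Ioc] at hmk
  rw [hstrip, Measure.volume_eq_prod, ← Measure.prod_restrict, Measure.restrict_univ]
  exact hmk.prod (MeasurePreserving.id volume)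

lemma lintegral_eq_lintegral_tsum_angleProj {h : ℝ × E → ℝ≥0∞} (hh : Measurable h) :
    ∫⁻ x, h x = ∫⁻ z : Angle × E, ∑' n : ℤ, h (z.1.toReal + 2 * π * n, z.2) := by
  have hsum : Measurable fun z : Angle × E => ∑' n : ℤ, h (z.1.toReal + 2 * π * n, z.2) :=
    Measurable.tsum fun n =>
      hh.comp (((measurable_toReal.comp measurable_fst).add_const _).prodMk measurable_snd)
  rw [Measure.volume_eq_prod, lintegral_prod_symm _ hh.aemeasurable, Measure.volume_eq_prod,
    lintegral_prod_symm _ hsum.aemeasurable]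
  exact lintegral_congr fun y =>
    lintegral_eq_lintegral_tsum_toReal (hh.comp measurable_prodMk_right)

lemma volume_preimage_angleProj {S : Set (Angle × E)} (hS : MeasurableSet S) :
    volume (angleProj ⁻¹' S) = ⊤ * volume S := by
  have hind : Measurable (S.indicator (1 : Angle × E → ℝ≥0∞)) := measurable_const.indicator hS
  have hcomp : (angleProj ⁻¹' S).indicator 1 =
      S.indicator (1 : Angle × E → ℝ≥0∞) ∘ angleProj := rfl
  rw [← lintegral_indicator_one (measurable_angleProj hS), hcomp,
    lintegral_eq_lintegral_tsum_angleProj (hind.comp measurable_angleProj),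
    ← lintegral_indicator_one hS, ← lintegral_const_mul _ hind]
  refine lintegral_congr fun z => ?_
  simp only [Function.comp_apply, angleProj_add_two_pi_mul, ENNReal.tsum_const,
    ENat.card_eq_top_of_infinite, ENat.toENNReal_top]
  simp only [angleProj, Angle.coe_toReal]

lemma ae_eq_preimage_angleProj_iff {S T : Set (Angle × E)} (hS : MeasurableSet S)
    (hT : MeasurableSet T) :
    angleProj ⁻¹' S =ᵐ[volume] angleProj ⁻¹' T ↔ S =ᵐ[volume] T := by
  simp only [ae_eq_set, ← preimage_sdiff, volume_preimage_angleProj (MeasurableSet.diff hS hT),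
    volume_preimage_angleProj (MeasurableSet.diff hT hS), mul_eq_zero, ENNReal.top_ne_zero,
    false_or]

end AngleProj

section RieszKernel

variable {E : Type*} [NormedAddCommGroup E] {γ : ℝ}

/-- The Riesz-type kernel of exponent `2γ` of `ℝ × E`, periodised in the first variable. -/
noncomputable def rieszKernel (γ : ℝ) (θ : Angle) (y y' : E) : ℝ≥0∞ :=
  periodizedRiesz γ θ.toReal ‖y - y'‖

lemma rieszKernel_coe (γ t : ℝ) (y y' : E) :
    rieszKernel γ (t : Angle) y y' = periodizedRiesz γ t ‖y - y'‖ :=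
  periodizedRiesz_eq_of_cos_eq γ _ (by rw [Angle.cos_toReal, Angle.cos_coe])

lemma measurable_rieszKernel [MeasurableSpace E] [OpensMeasurableSpace E] [MeasurableSub₂ E]
    (γ : ℝ) : Measurable fun p : Angle × E × E => rieszKernel γ p.1 p.2.1 p.2.2 := by
  have hangle : Measurable fun p : Angle × E × E => p.1.toReal :=
    measurable_toReal.comp measurable_fst
  have hnorm : Measurable fun p : Angle × E × E => ‖p.2.1 - p.2.2‖ := by fun_prop
  simpa only [rieszKernel, Function.comp_def] using
    (measurable_periodizedRiesz γ).comp (hangle.prodMk hnorm)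

lemma rieszKernel_lt_iff (hγ : 1 / 2 < γ) (θ φ : Angle) (y y' : E) :
    rieszKernel γ θ y y' < rieszKernel γ φ y y' ↔ θ.cos < φ.cos := by
  rw [rieszKernel, rieszKernel, ← Angle.cos_toReal, ← Angle.cos_toReal φ]
  refine ⟨fun h => lt_of_not_ge fun hle => ?_, periodizedRiesz_lt_of_cos_lt hγ _⟩
  rcases hle.lt_or_eq with hlt | heq
  · exact h.not_gt (periodizedRiesz_lt_of_cos_lt hγ _ hlt)
  · exact h.ne (periodizedRiesz_eq_of_cos_eq γ _ heq.symm)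

lemma isCosMonotone_rieszKernel [MeasurableSpace E] [OpensMeasurableSpace E] [MeasurableSub₂ E]
    (hγ : 1 / 2 < γ) : IsCosMonotone (rieszKernel γ : Angle → E → E → ℝ≥0∞) where
  measurable := measurable_rieszKernel γ
  lt_iff := rieszKernel_lt_iff hγ

end RieszKernel

section Gagliardo

variable {m : ℕ} {f : Angle × EuclideanSpace ℝ (Fin m) → ℝ}

lemma gagSeminorm_one (s : ℝ) (u : ℝ × EuclideanSpace ℝ (Fin m) → ℝ) :
    gagSeminorm m s 1 u = gagP m s 1 u := by
  rw [gagSeminorm, div_one, ENNReal.rpow_one]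

lemma gagliardo_integrand_eq (s : ℝ) (u : ℝ × EuclideanSpace ℝ (Fin m) → ℝ)
    (x y : ℝ × EuclideanSpace ℝ (Fin m)) :
    ENNReal.ofReal (|u x - u y| ^ (1 : ℝ) /
        √((x.1 - y.1) ^ 2 + ‖x.2 - y.2‖ ^ 2) ^ ((m : ℝ) + 1 + s * 1)) =
      ENNReal.ofReal |u x - u y| *
        ENNReal.ofReal ((x.1 - y.1) ^ 2 + ‖x.2 - y.2‖ ^ 2) ^ (-((m + 1 + s) / 2)) := by
  rcases eq_or_ne x y with rfl | hxy
  · simp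
  · have hpos : 0 < (x.1 - y.1) ^ 2 + ‖x.2 - y.2‖ ^ 2 := by
      rcases not_and_or.1 (mt Prod.ext_iff.2 hxy) with h | h
      · have := sub_ne_zero.2 h
        positivity
      · have := norm_pos_iff.2 (sub_ne_zero.2 h)
        positivity
    rw [rpow_one, div_eq_mul_inv, ENNReal.ofReal_mul (abs_nonneg _),
      ENNReal.ofReal_rpow_of_pos hpos, sqrt_eq_rpow, ← rpow_mul hpos.le, ← rpow_neg hpos.le]
    ring_nf

lemma lintegral_gagliardo_angleProj (s : ℝ) (hf : Measurable f)
    (x : ℝ × EuclideanSpace ℝ (Fin m)) :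
    ∫⁻ y, ENNReal.ofReal (|f (angleProj x) - f (angleProj y)| ^ (1 : ℝ) /
        √((x.1 - y.1) ^ 2 + ‖x.2 - y.2‖ ^ 2) ^ ((m : ℝ) + 1 + s * 1)) =
      ∫⁻ z, ENNReal.ofReal |f (angleProj x) - f z| *
        angularKernel (rieszKernel ((m + 1 + s) / 2)) (angleProj x) z := by
  have hmeas : Measurable fun y : ℝ × EuclideanSpace ℝ (Fin m) =>
      ENNReal.ofReal |f (angleProj x) - f (angleProj y)| *
        ENNReal.ofReal ((x.1 - y.1) ^ 2 + ‖x.2 - y.2‖ ^ 2) ^ (-((m + 1 + s) / 2)) := by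
    have hproj := measurable_angleProj (E := EuclideanSpace ℝ (Fin m))
    fun_prop
  rw [lintegral_congr fun y => gagliardo_integrand_eq s (fun x => f (angleProj x)) x y,
    lintegral_eq_lintegral_tsum_angleProj hmeas]
  refine lintegral_congr fun z => ?_
  have hz : angleProj (z.1.toReal, z.2) = z := Prod.ext (Angle.coe_toReal z.1) rfl
  have hcoe : (x.1 : Angle) - z.1 = ((x.1 - z.1.toReal : ℝ) : Angle) := by
    rw [Angle.coe_sub, Angle.coe_toReal]
  have hcos : cos (x.1 - z.1.toReal) = cos (z.1.toReal - x.1) := by rw [← cos_neg, neg_sub]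
  simp only [angleProj_add_two_pi_mul, hz, ENNReal.tsum_mul_left]
  rw [angularKernel, angleProj, hcoe, rieszKernel_coe, periodizedRiesz_eq_of_cos_eq _ _ hcos,
    periodizedRiesz]
  congr 1
  exact tsum_congr fun n => by ring_nf

theorem gagP_comp_angleProj (s : ℝ) (hf : Measurable f) :
    gagP m s 1 (fun x => f (angleProj x)) =
      kernelEnergy (angularKernel (rieszKernel ((m + 1 + s) / 2))) volume f := by
  have hmeas := measurable_ofReal_abs_sub_mul
    (measurable_angularKernel (measurable_rieszKernel ((m + 1 + s) / 2))) hf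
  rw [kernelEnergy, lintegral_prod _ hmeas.aemeasurable,
    ← measurePreserving_angleProj.lintegral_comp hmeas.lintegral_prod_right']
  exact lintegral_congr fun x => lintegral_gagliardo_angleProj s hf x

end Gagliardo

section Rearrangement

variable {E : Type*} {m : ℕ}

lemma volume_Ioo_inter_preimage_coe {S : Set Angle} (hS : MeasurableSet S) :
    volume {t : ℝ | t ∈ Ioo (-π) π ∧ (t : Angle) ∈ S} = volume S := by
  have hae : ({t | t ∈ Ioo (-π) π ∧ (t : Angle) ∈ S} : Set ℝ) =ᵐ[volume]
      (((↑) : ℝ → Angle) ⁻¹' S ∩ Ioc (-π) (-π + 2 * π) : Set ℝ) := by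
    rw [inter_comm, show -π + 2 * π = π by ring]
    exact Ioo_ae_eq_Ioc.inter (ae_eq_refl (((↑) : ℝ → Angle) ⁻¹' S))
  exact (measure_congr hae).trans
    (AddCircle.add_projection_respects_measure (2 * π) (-π) hS).symm

lemma abs_sub_two_pi_mul_floor (t : ℝ) :
    |t - 2 * π * ⌊(t + π) / (2 * π)⌋| = |(t : Angle).toReal| := by
  set t' := t - 2 * π * ⌊(t + π) / (2 * π)⌋ with ht'
  have hlow : -π ≤ t' := by
    have := (le_div_iff₀ two_pi_pos).1 (Int.floor_le ((t + π) / (2 * π)))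
    linarith
  have hup : t' < π := by
    have := (div_lt_iff₀ two_pi_pos).1 (Int.lt_floor_add_one ((t + π) / (2 * π)))
    linarith
  have hcoe : (t : Angle) = (t' : Angle) :=
    Angle.angle_eq_iff_two_pi_dvd_sub.2 ⟨⌊(t + π) / (2 * π)⌋, by rw [ht']; ring⟩
  rcases hlow.eq_or_lt with heq | hlt
  · rw [hcoe, ← heq, Angle.coe_neg, Angle.neg_coe_pi, Angle.toReal_pi, abs_neg]
  · rw [hcoe, Angle.toReal_coe_eq_self_iff_mem_Ioc.2 ⟨hlt, hup.le⟩]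

theorem perRearr1_comp_angleProj {f : Angle × EuclideanSpace ℝ (Fin m) → ℝ} (hf : Measurable f) :
    perRearr1 m (fun x => f (angleProj x)) =
      fun x => steinerRearrangement (fun z => |f z|) (angleProj x) := by
  funext x
  refine setIntegral_congr_fun measurableSet_Ioi fun t _ => ?_
  have hslice : MeasurableSet {θ : Angle | t < |f (θ, x.2)|} :=
    measurableSet_lt measurable_const (by fun_prop)
  refine indicator_eq_indicator ?_ rfl
  rw [symmSet, mem_Ioo, ← abs_lt, abs_sub_two_pi_mul_floor]
  exact iff_of_eq (congrArg (fun v => _ < v.toReal / 2) (volume_Ioo_inter_preimage_coe hslice))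

theorem perRearrSet_preimage_angleProj {A : Set (Angle × EuclideanSpace ℝ (Fin m))}
    (hA : MeasurableSet A) : perRearrSet m (angleProj ⁻¹' A) = angleProj ⁻¹' steinerSet A := by
  have habs : (fun z => |A.indicator (fun _ => (1 : ℝ)) z|) = A.indicator fun _ => 1 :=
    funext fun z => abs_of_nonneg (indicator_nonneg (fun _ _ => zero_le_one) z)
  have hrearr := perRearr1_comp_angleProj (measurable_const.indicator hA (f := fun _ => (1 : ℝ)))
  rw [habs, steinerRearrangement_indicator] at hrearr
  ext x
  refine (iff_of_eq (congrArg (0 < · x) hrearr)).trans ?_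
  by_cases hx : angleProj x ∈ steinerSet A <;> simp [hx]

lemma exists_ae_eq_translate_perRearrSet_iff {A : Set (Angle × EuclideanSpace ℝ (Fin m))}
    (hA : MeasurableSet A) :
    (∃ a : ℝ, angleProj ⁻¹' A =ᵐ[volume]
        {x | (x.1 - a, x.2) ∈ perRearrSet m (angleProj ⁻¹' A)}) ↔
      ∃ a : Angle, A =ᵐ[volume] {z | (z.1 - a, z.2) ∈ steinerSet A} := by
  have hcoe : Function.Surjective ((↑) : ℝ → Angle) := QuotientAddGroup.mk_surjective
  rw [perRearrSet_preimage_angleProj hA]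
  refine Iff.trans (exists_congr fun a => ?_) hcoe.exists.symm
  have htrans : MeasurableSet
      {z : Angle × EuclideanSpace ℝ (Fin m) | (z.1 - (a : Angle), z.2) ∈ steinerSet A} :=
    (measurableSet_steinerSet hA).preimage
      ((measurable_fst.sub_const (a : Angle)).prodMk measurable_snd)
  exact ae_eq_preimage_angleProj_iff hA htrans

end Rearrangement

end PeriodicRearrangement

open PeriodicRearrangement in
theorem stmt_9_general (m : ℕ) (s : ℝ) (hs : 0 < s)
    (u : ℝ × EuclideanSpace ℝ (Fin m) → ℝ) (hu : Continuous u)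
    (huper : ∀ x : ℝ × EuclideanSpace ℝ (Fin m), u (x.1 + 2 * π, x.2) = u x)
    (hfin : gagP m s 1 u ≠ ⊤) :
    gagSeminorm m s 1 (perRearr1 m u) = gagSeminorm m s 1 u ↔
      (((∀ x, u x = |u x|) ∨ (∀ x, u x = -|u x|)) ∧
        ∀ᵐ τ ∂(volume : Measure ℝ), ∃ a : ℝ,
          ({x | τ < |u x|} : Set (ℝ × EuclideanSpace ℝ (Fin m))) =ᵐ[volume]
            {x | (x.1 - a, x.2) ∈ perRearrSet m {y | τ < |u y|}}) := by
  obtain ⟨v, rfl⟩ := exists_continuousMap_comp_angleProj hu huper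
  have hv : Measurable v := v.continuous.measurable
  have hK : IsCosMonotone (rieszKernel ((m + 1 + s) / 2) :
      Angle → EuclideanSpace ℝ (Fin m) → EuclideanSpace ℝ (Fin m) → ℝ≥0∞) :=
    isCosMonotone_rieszKernel (by linarith [m.cast_nonneg (α := ℝ)])
  rw [gagP_comp_angleProj s hv] at hfin
  rw [gagSeminorm_one, gagSeminorm_one, perRearr1_comp_angleProj hv,
    gagP_comp_angleProj s (measurable_steinerRearrangement (by fun_prop)),
    gagP_comp_angleProj s hv, hK.kernelEnergy_steinerRearrangement_abs_eq_iff v hfin,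
    angleProj_surjective.forall, angleProj_surjective.forall]
  refine and_congr_right fun _ => Filter.eventually_congr (.of_forall fun τ => ?_)
  exact (exists_ae_eq_translate_perRearrSet_iff (measurableSet_lt (by fun_prop) (by fun_prop))).symm

theorem stmt_9 (m : ℕ) (s : ℝ) (hs0 : 0 < s) (hs1 : s < 1)
    (u : ℝ × EuclideanSpace ℝ (Fin m) → ℝ) (hu : Continuous u)
    (huper : ∀ x : ℝ × EuclideanSpace ℝ (Fin m), u (x.1 + 2 * π, x.2) = u x)
    (hfin : gagP m s 1 u ≠ ⊤) :
    gagSeminorm m s 1 (perRearr1 m u) = gagSeminorm m s 1 u ↔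
      (((∀ x, u x = |u x|) ∨ (∀ x, u x = -|u x|)) ∧
        ∀ᵐ τ ∂(volume : Measure ℝ), ∃ a : ℝ,
          ({x | τ < |u x|} : Set (ℝ × EuclideanSpace ℝ (Fin m))) =ᵐ[volume]
            {x | (x.1 - a, x.2) ∈ perRearrSet m {y | τ < |u y|}}) :=
  stmt_9_general m s hs0 u hu huper hfin
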